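/- Let x ∈ A_N (N ≥ 3) have 2k cycles of even length. The Hurwitz action of the braid group B_{ℓ_3(x)} on the set Red_3(x) of minimal factorizations of x into 3-cycles has exactly (k+1)(k+2)···(2k) orbits. In particular, the action is transitive if and only if all cycles of x have odd length. -/

import Mathlib

open Equiv Equiv.Perm

/-- The word length of `x` with respect to a generating set `T`. -/
noncomputable def lenT {G : Type*} [Group G] (T : Set G) (x : G) : ℕ :=
  sInf {n | ∃ l : List G, (∀ t ∈ l, t ∈ T) ∧ l.prod = x ∧ l.length = n}

/-- The `T`-prefix order. -/
def leT {G : Type*} [Group G] (T : Set G) (x y : G) : Prop :=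
  lenT T y = lenT T x + lenT T (x⁻¹ * y)

/-- The set of 3-cycles of the symmetric group on `Fin N`. -/
def threeCycles (N : ℕ) : Set (Perm (Fin N)) := {σ | σ.IsThreeCycle}

/-- The set of transpositions of the symmetric group on `Fin N`. -/
def transpositions (N : ℕ) : Set (Perm (Fin N)) := {σ | σ.IsSwap}

/-- The number of odd cycles of a permutation, counting fixed points. -/
def ocyc {N : ℕ} (x : Perm (Fin N)) : ℕ :=
  (x.cycleType.filter (fun n => Odd n)).card + (N - x.cycleType.sum)

/-- An elementary Hurwitz move (the action of a braid generator `σ_i`):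
`(…, t, u, …) ↦ (…, u, u⁻¹tu, …)`.  Orbits of the braid-group (Hurwitz) action are
exactly the equivalence classes of the equivalence relation generated by this move. -/
def HurwitzMove {G : Type*} [Group G] (w w' : List G) : Prop :=
  ∃ l₁ l₂ : List G, ∃ t u : G,
    w = l₁ ++ t :: u :: l₂ ∧ w' = l₁ ++ u :: (u⁻¹ * t * u) :: l₂

/-!
Multiplying by a 3-cycle changes the number of odd cycles (fixed points included) by at most two, so
a factorization is minimal exactly when each deletion of the first letter adds two odd cycles to the
product. Such a deletion either splits one cycle into three, or turns two even cycles into two odd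
ones. If all cycles are odd, only splittings occur, and by induction there is a single orbit.

Otherwise fix a point `p` of an even cycle. Every orbit contains a factorization that starts with
`(p, x p, b)`, where `b` lies on another even cycle, and Hurwitz moves can replace `b` by `x² b`. So
the first letter amounts to the choice of one of the `2k - 1` other even cycles and of one of the
two parity classes of points on it. The remaining letters factorize a permutation with two even
cycles fewer, and their orbit is determined by the orbit of the whole. Once different choices of the
first letter are known to give different orbits, there are `∏ 2 (2j - 1) = (k + 1) ⋯ (2k)` orbits.

The even cycle of `b` is determined because all letters of all factorizations in the orbit map the
union of the two even cycles to itself. To distinguish the two parity classes, restrict to the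
letters on this union and lift 3-cycles to a Clifford algebra whose generators they permute. The
product of the lifts is invariant under Hurwitz moves, while conjugation by one even cycle exchanges
the parity classes and changes the sign of the product.
-/

namespace ThreeCycleFactorization

/-! ### Cycles of a permutation multiplied by a transposition -/

section SwapMul

variable {α : Type*}

theorem sameCycle_self_apply (x : Perm α) (p : α) : x.SameCycle p (x p) :=
  SameCycle.rfl.apply_right

theorem ne_of_not_sameCycle {x : Perm α} {p q : α} (h : ¬ x.SameCycle p q) : p ≠ q :=
  fun hpq => h (hpq.sameCycle x)

theorem mem_of_sameCycle_of_mapsTo [Finite α] {x : Perm α} {s : Set α} (hs : Set.MapsTo x s s)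
    {p q : α} (hp : p ∈ s) (hpq : x.SameCycle p q) : q ∈ s := by
  obtain ⟨n, rfl⟩ := hpq.exists_nat_pow_eq
  simpa using hs.perm_pow n hp

theorem sameCycle_of_forall_sameCycle_apply [Finite α] {x y : Perm α}
    (h : ∀ r, x.SameCycle r (y r)) {p q : α} (hpq : y.SameCycle p q) : x.SameCycle p q :=
  mem_of_sameCycle_of_mapsTo (s := {q | x.SameCycle p q}) (fun r hr => SameCycle.trans hr (h r))
    SameCycle.rfl hpq

theorem apply_eq_of_forall_fixed {x y t : Perm α} (hxy : x = t * y) {p q : α}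
    (hfix : ∀ q, x.SameCycle p q → t q = q) (hq : x.SameCycle p q) : y q = x q :=
  t.injective <| by rw [hfix _ hq.apply_right, hxy, mul_apply]

variable [DecidableEq α]

section Merge

variable {y : Perm α} {a b : α}

theorem sameCycle_swap_mul_pow (hab : ¬ y.SameCycle a b) (n : ℕ) :
    (swap a b * y).SameCycle a ((y ^ n) a) := by
  induction n with
  | zero => exact SameCycle.rfl
  | succ n ih =>
    by_cases hna : (y ^ (n + 1)) a = a
    · rw [hna]
    · have hnb : (y ^ (n + 1)) a ≠ b := fun hnb => hab (hnb ▸ sameCycle_pow_right.2 SameCycle.rfl)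
      have hstep : (swap a b * y) ((y ^ n) a) = (y ^ (n + 1)) a := by
        rw [pow_succ', mul_apply] at hna hnb ⊢
        exact swap_apply_of_ne_of_ne hna hnb
      rw [← hstep]
      exact ih.apply_right

variable [Finite α]

theorem sameCycle_swap_mul_apply (hab : ¬ y.SameCycle a b) (p : α) :
    (swap a b * y).SameCycle p (y p) := by
  by_cases hpa : y p = a
  · obtain ⟨n, hn⟩ := (hpa ▸ (sameCycle_self_apply y p).symm).exists_nat_pow_eq
    rw [hpa, ← hn]
    exact (sameCycle_swap_mul_pow hab n).symm
  by_cases hpb : y p = b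
  · obtain ⟨n, hn⟩ := (hpb ▸ (sameCycle_self_apply y p).symm).exists_nat_pow_eq
    rw [hpb, ← hn, swap_comm]
    exact (sameCycle_swap_mul_pow (fun h => hab h.symm) n).symm
  · rw [← swap_apply_of_ne_of_ne hpa hpb, ← mul_apply]
    exact sameCycle_self_apply _ p

theorem sameCycle_swap_mul_of_sameCycle (hab : ¬ y.SameCycle a b) {p q : α}
    (hpq : y.SameCycle p q) : (swap a b * y).SameCycle p q :=
  sameCycle_of_forall_sameCycle_apply (sameCycle_swap_mul_apply hab) hpq

theorem sameCycle_swap_mul_left_right (hab : ¬ y.SameCycle a b) :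
    (swap a b * y).SameCycle a b := by
  have hto : (swap a b * y) (y⁻¹ a) = b := by simp
  have hstep := sameCycle_self_apply (swap a b * y) (y⁻¹ a)
  have hstep' := sameCycle_swap_mul_apply hab (y⁻¹ a)
  rw [hto] at hstep
  rw [show y (y⁻¹ a) = a by simp] at hstep'
  exact hstep'.symm.trans hstep

theorem sameCycle_swap_mul_iff (hab : ¬ y.SameCycle a b) {p q : α} :
    (swap a b * y).SameCycle p q ↔ y.SameCycle p q ∨
      (y.SameCycle a p ∨ y.SameCycle b p) ∧ (y.SameCycle a q ∨ y.SameCycle b q) := by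
  constructor
  · refine mem_of_sameCycle_of_mapsTo (s := {q | y.SameCycle p q ∨
      (y.SameCycle a p ∨ y.SameCycle b p) ∧ (y.SameCycle a q ∨ y.SameCycle b q)}) ?_
      (Or.inl SameCycle.rfl)
    intro r hr
    have hr' := sameCycle_self_apply y r
    simp only [Set.mem_ofPred_eq, mul_apply] at hr ⊢
    by_cases hra : y r = a
    · rw [hra, swap_apply_left]
      rw [hra] at hr'
      exact Or.inr ⟨hr.elim (fun h => Or.inl (h.trans hr').symm) And.left, Or.inr SameCycle.rfl⟩
    by_cases hrb : y r = b
    · rw [hrb, swap_apply_right]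
      rw [hrb] at hr'
      exact Or.inr ⟨hr.elim (fun h => Or.inr (h.trans hr').symm) And.left, Or.inl SameCycle.rfl⟩
    rw [swap_apply_of_ne_of_ne hra hrb]
    simpa only [sameCycle_apply_right] using hr
  · have mono {p q : α} := sameCycle_swap_mul_of_sameCycle hab (p := p) (q := q)
    have hab' := sameCycle_swap_mul_left_right hab
    rintro (hpq | ⟨hp | hp, hq | hq⟩)
    · exact mono hpq
    · exact mono (hp.symm.trans hq)
    · exact (mono hp).symm.trans (hab'.trans (mono hq))
    · exact (mono hp).symm.trans (hab'.symm.trans (mono hq))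
    · exact mono (hp.symm.trans hq)

end Merge

-- The arc of the `x`-cycle from `a` up to just before `b` is closed under `swap a b * x`.
theorem not_sameCycle_swap_mul [Finite α] {x : Perm α} {a b : α} (hne : a ≠ b)
    (hab : x.SameCycle a b) : ¬ (swap a b * x).SameCycle a b := by
  have hex := hab.exists_nat_pow_eq
  set n := Nat.find hex
  have hnb : (x ^ n) a = b := Nat.find_spec hex
  have hmin : ∀ m < n, (x ^ m) a ≠ b := fun m hm => Nat.find_min hex hm
  have hpos : 0 < n := Nat.pos_of_ne_zero fun h0 => hne (by simpa [h0] using hnb)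
  have hclosed : Set.MapsTo (swap a b * x) {q | ∃ i < n, (x ^ i) a = q}
      {q | ∃ i < n, (x ^ i) a = q} := by
    rintro _ ⟨i, hi, rfl⟩
    rw [show (swap a b * x) ((x ^ i) a) = swap a b ((x ^ (i + 1)) a) by rw [pow_succ']; rfl]
    rcases eq_or_lt_of_le (Nat.succ_le_of_lt hi) with hin | hin
    · rw [show i + 1 = n from hin, hnb, swap_apply_right]
      exact ⟨0, hpos, rfl⟩
    · have hia : (x ^ (i + 1)) a ≠ a := fun hia => hmin (n - (i + 1)) (by omega) <| by
        rw [← hnb, ← Nat.sub_add_cancel hin.le, pow_add, mul_apply, hia, Nat.sub_add_cancel hin.le]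
      rw [swap_apply_of_ne_of_ne hia (hmin _ hin)]
      exact ⟨i + 1, hin, rfl⟩
  intro hab'
  obtain ⟨i, hi, hib⟩ := mem_of_sameCycle_of_mapsTo hclosed ⟨0, hpos, rfl⟩ hab'
  exact hmin i hi hib

end SwapMul

/-! ### Counting odd cycles -/

section CycleSet

variable {α : Type*} [Fintype α] [DecidableEq α] {x y : Perm α} {a b c p q : α}

/-- The set of points of the cycle of `x` through `p`; it is `{p}` at a fixed point, unlike
`(x.cycleOf p).support`. -/
def cycleSet (x : Perm α) (p : α) : Finset α := {q | x.SameCycle p q}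

/-- All cycles of `x`, as sets of points; fixed points are cycles of length one. -/
def cycles (x : Perm α) : Finset (Finset α) := Finset.univ.image (cycleSet x)

/-- The number of cycles of `x` of odd length, fixed points included. -/
def oddCycleCount (x : Perm α) : ℕ := ((cycles x).filter fun C => Odd C.card).card

/-- The cycles of `x` of even length, as sets of points. -/
def evenCycles (x : Perm α) : Finset (Finset α) := (cycles x).filter fun C => Even C.card

theorem mem_cycleSet : q ∈ cycleSet x p ↔ x.SameCycle p q := by simp [cycleSet]

theorem self_mem_cycleSet (x : Perm α) (p : α) : p ∈ cycleSet x p := mem_cycleSet.2 SameCycle.rfl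

theorem cycleSet_eq_iff : cycleSet x p = cycleSet x q ↔ x.SameCycle p q := by
  refine ⟨fun h => mem_cycleSet.1 (h ▸ self_mem_cycleSet x q), fun h => ?_⟩
  ext r
  simp only [mem_cycleSet]
  exact ⟨h.symm.trans, h.trans⟩

theorem disjoint_cycleSet (h : ¬ x.SameCycle p q) : Disjoint (cycleSet x p) (cycleSet x q) :=
  Finset.disjoint_left.2 fun _ hp hq => h ((mem_cycleSet.1 hp).trans (mem_cycleSet.1 hq).symm)

theorem cycleSet_eq_singleton (h : x p = p) : cycleSet x p = {p} := by
  ext q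
  rw [mem_cycleSet, Finset.mem_singleton]
  exact ⟨fun hq => (hq.eq_of_left h).symm, fun hq => hq.symm.sameCycle x⟩

theorem cycleSet_congr (h : ∀ q, x.SameCycle p q → y q = x q) : cycleSet y p = cycleSet x p := by
  have hpow (n : ℕ) : (y ^ n) p = (x ^ n) p := by
    induction n with
    | zero => rfl
    | succ n ih =>
      rw [pow_succ', pow_succ', mul_apply, mul_apply, ih,
        h _ (sameCycle_pow_right.2 SameCycle.rfl)]
  ext q
  rw [mem_cycleSet, mem_cycleSet]
  constructor <;> intro hq <;> obtain ⟨n, rfl⟩ := hq.exists_nat_pow_eq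
  · exact hpow n ▸ sameCycle_pow_right.2 SameCycle.rfl
  · exact hpow n ▸ sameCycle_pow_right.2 SameCycle.rfl

theorem cycleSet_eq_of_forall_fixed {t : Perm α} (hxy : x = t * y)
    (hfix : ∀ q, x.SameCycle p q → t q = q) : cycleSet y p = cycleSet x p :=
  cycleSet_congr fun _ => apply_eq_of_forall_fixed hxy hfix

theorem apply_ne_self_of_even (h : Even (cycleSet x p).card) : x p ≠ p := fun hp => by
  simp [cycleSet_eq_singleton hp] at h

theorem apply_apply_ne_self_of_odd (h : Odd (cycleSet x p).card) (hp : x p ≠ p) :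
    x (x p) ≠ p := by
  intro hpp
  have hpair : cycleSet x p = {p, x p} := by
    refine Finset.Subset.antisymm (fun q hq => ?_) ?_
    · have hq' : q ∈ ({p, x p} : Set α) :=
        mem_of_sameCycle_of_mapsTo (by rintro _ (rfl | rfl) <;> simp [hpp]) (by simp)
          (mem_cycleSet.1 hq)
      simpa using hq'
    · simp [Finset.insert_subset_iff, mem_cycleSet, SameCycle.rfl]
  rw [hpair, Finset.card_pair hp.symm] at h
  exact absurd h (by decide)

theorem cycleSet_mem_cycles (x : Perm α) (p : α) : cycleSet x p ∈ cycles x :=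
  Finset.mem_image_of_mem _ (Finset.mem_univ p)

theorem mem_cycles {C : Finset α} : C ∈ cycles x ↔ ∃ p, cycleSet x p = C := by simp [cycles]

theorem mem_evenCycles {C : Finset α} :
    C ∈ evenCycles x ↔ (∃ p, cycleSet x p = C) ∧ Even C.card := by
  rw [evenCycles, Finset.mem_filter, mem_cycles]

theorem oddCycleCount_eq_sum_mod_two (x : Perm α) :
    oddCycleCount x = ∑ C ∈ cycles x, C.card % 2 := by
  rw [oddCycleCount, Finset.card_filter]
  refine Finset.sum_congr rfl fun C _ => ?_
  split_ifs with hC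
  · exact (Nat.odd_iff.1 hC).symm
  · exact (Nat.even_iff.1 (Nat.not_odd_iff_even.1 hC)).symm

theorem oddCycleCount_le_card (x : Perm α) : oddCycleCount x ≤ Fintype.card α :=
  (Finset.card_filter_le _ _).trans Finset.card_image_le

theorem oddCycleCount_one : oddCycleCount (1 : Perm α) = Fintype.card α := by
  have hcycle : cycleSet (1 : Perm α) = fun p => {p} := funext fun _ => cycleSet_eq_singleton rfl
  rw [oddCycleCount_eq_sum_mod_two, cycles, hcycle,
    Finset.sum_image fun _ _ _ _ => Finset.singleton_inj.1]
  simp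

theorem cycleSet_swap_mul (hab : ¬ y.SameCycle a b) :
    cycleSet (swap a b * y) a = cycleSet y a ∪ cycleSet y b := by
  ext q
  simp only [mem_cycleSet, Finset.mem_union, sameCycle_swap_mul_iff hab]
  have := SameCycle.refl y a
  tauto

theorem cycleSet_swap_mul_of_not_sameCycle (hab : ¬ y.SameCycle a b) (hap : ¬ y.SameCycle a p)
    (hbp : ¬ y.SameCycle b p) : cycleSet (swap a b * y) p = cycleSet y p := by
  ext q
  simp only [mem_cycleSet, sameCycle_swap_mul_iff hab]
  tauto

theorem card_cycleSet_swap_mul (hab : ¬ y.SameCycle a b) :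
    (cycleSet (swap a b * y) a).card = (cycleSet y a).card + (cycleSet y b).card := by
  rw [cycleSet_swap_mul hab, Finset.card_union_of_disjoint (disjoint_cycleSet hab)]

theorem cycles_swap_mul (hab : ¬ y.SameCycle a b) :
    cycles (swap a b * y) = insert (cycleSet y a ∪ cycleSet y b)
      (((cycles y).erase (cycleSet y a)).erase (cycleSet y b)) := by
  ext C
  simp only [Finset.mem_insert, Finset.mem_erase, mem_cycles]
  constructor
  · rintro ⟨p, rfl⟩
    by_cases hap : (swap a b * y).SameCycle a p
    · left
      rw [← cycleSet_eq_iff.2 hap, cycleSet_swap_mul hab]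
    · rw [sameCycle_swap_mul_iff hab] at hap
      have hap' : ¬ y.SameCycle a p := fun h => hap (Or.inl h)
      have hbp' : ¬ y.SameCycle b p := fun h => hap (Or.inr ⟨Or.inl SameCycle.rfl, Or.inr h⟩)
      rw [cycleSet_swap_mul_of_not_sameCycle hab hap' hbp']
      exact Or.inr ⟨fun h => hbp' (cycleSet_eq_iff.1 h).symm,
        fun h => hap' (cycleSet_eq_iff.1 h).symm, p, rfl⟩
  · rintro (rfl | ⟨hb, ha, p, rfl⟩)
    · exact ⟨a, cycleSet_swap_mul hab⟩
    · exact ⟨p, cycleSet_swap_mul_of_not_sameCycle hab (fun h => ha (cycleSet_eq_iff.2 h.symm))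
        fun h => hb (cycleSet_eq_iff.2 h.symm)⟩

theorem union_cycleSet_notMem_cycles (hab : ¬ y.SameCycle a b) :
    cycleSet y a ∪ cycleSet y b ∉ cycles y := by
  rw [mem_cycles]
  rintro ⟨p, hp⟩
  have ha : a ∈ cycleSet y p := hp ▸ Finset.mem_union_left _ (self_mem_cycleSet y a)
  have hb : b ∈ cycleSet y p := hp ▸ Finset.mem_union_right _ (self_mem_cycleSet y b)
  exact hab ((mem_cycleSet.1 ha).symm.trans (mem_cycleSet.1 hb))

theorem oddCycleCount_swap_mul (hab : ¬ y.SameCycle a b) :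
    oddCycleCount (swap a b * y) + ((cycleSet y a).card % 2 + (cycleSet y b).card % 2) =
      oddCycleCount y + ((cycleSet y a).card + (cycleSet y b).card) % 2 := by
  have hb : cycleSet y b ∈ (cycles y).erase (cycleSet y a) :=
    Finset.mem_erase.2 ⟨fun h => hab (cycleSet_eq_iff.1 h).symm, cycleSet_mem_cycles y b⟩
  have hsum_a := Finset.add_sum_erase _ (fun C : Finset α => C.card % 2) (cycleSet_mem_cycles y a)
  have hsum_b := Finset.add_sum_erase _ (fun C : Finset α => C.card % 2) hb
  rw [oddCycleCount_eq_sum_mod_two, oddCycleCount_eq_sum_mod_two, cycles_swap_mul hab,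
    Finset.sum_insert fun h => union_cycleSet_notMem_cycles hab
      (Finset.mem_of_mem_erase (Finset.mem_of_mem_erase h)),
    Finset.card_union_of_disjoint (disjoint_cycleSet hab)]
  omega

end CycleSet

/-! ### Multiplication by a 3-cycle -/

section ThreeCycle

variable {α : Type*} [DecidableEq α] {x y : Perm α} {a b c p : α}

/-- The permutation `a ↦ b ↦ c ↦ a`, a 3-cycle when `a`, `b`, `c` are distinct. -/
def threeCycle (a b c : α) : Perm α := swap a b * swap b c

/-- The three points `a`, `b`, `c` are pairwise distinct. -/
structure DistinctTriple {α : Type*} (a b c : α) : Prop where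
  ab : a ≠ b
  bc : b ≠ c
  ac : a ≠ c

theorem DistinctTriple.rotate {α : Type*} {a b c : α} (h : DistinctTriple a b c) :
    DistinctTriple b c a :=
  ⟨h.bc, h.ac.symm, h.ab.symm⟩

theorem threeCycle_apply_left (h : DistinctTriple a b c) : threeCycle a b c a = b := by
  simp [threeCycle, swap_apply_of_ne_of_ne h.ab h.ac]

theorem threeCycle_apply_middle (h : DistinctTriple a b c) : threeCycle a b c b = c := by
  simp [threeCycle, swap_apply_of_ne_of_ne h.ac.symm h.bc.symm]

theorem threeCycle_apply_right (a b c : α) : threeCycle a b c c = a := by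
  simp [threeCycle]

theorem threeCycle_apply_of_ne (ha : p ≠ a) (hb : p ≠ b) (hc : p ≠ c) :
    threeCycle a b c p = p := by
  simp [threeCycle, swap_apply_of_ne_of_ne hb hc, swap_apply_of_ne_of_ne ha hb]

theorem threeCycle_inv_apply_middle (h : DistinctTriple a b c) : (threeCycle a b c)⁻¹ b = a := by
  rw [Perm.inv_eq_iff_eq, threeCycle_apply_left h]

theorem threeCycle_inv_apply_right (h : DistinctTriple a b c) : (threeCycle a b c)⁻¹ c = b := by
  rw [Perm.inv_eq_iff_eq, threeCycle_apply_middle h]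

theorem threeCycle_inv_apply_left (a b c : α) : (threeCycle a b c)⁻¹ a = c := by
  rw [Perm.inv_eq_iff_eq, threeCycle_apply_right]

theorem threeCycle_inv_apply_of_ne (ha : p ≠ a) (hb : p ≠ b) (hc : p ≠ c) :
    (threeCycle a b c)⁻¹ p = p := by
  rw [Perm.inv_eq_iff_eq, threeCycle_apply_of_ne ha hb hc]

theorem threeCycle_rotate (h : DistinctTriple a b c) : threeCycle b c a = threeCycle a b c := by
  ext p
  by_cases hpa : p = a
  · rw [hpa, threeCycle_apply_left h, threeCycle_apply_right]
  by_cases hpb : p = b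
  · rw [hpb, threeCycle_apply_middle h, threeCycle_apply_left h.rotate]
  by_cases hpc : p = c
  · rw [hpc, threeCycle_apply_right, threeCycle_apply_middle h.rotate]
  rw [threeCycle_apply_of_ne hpa hpb hpc, threeCycle_apply_of_ne hpb hpc hpa]

theorem conj_threeCycle (g : Perm α) (a b c : α) :
    g * threeCycle a b c * g⁻¹ = threeCycle (g a) (g b) (g c) := by
  have hswap (p q : α) : swap (g p) (g q) = g * swap p q * g⁻¹ := by
    rw [mul_swap_eq_swap_mul, mul_inv_cancel_right]
  simp only [threeCycle, hswap]
  group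

theorem isThreeCycle_threeCycle [Fintype α] (h : DistinctTriple a b c) :
    (threeCycle a b c).IsThreeCycle := by
  rw [threeCycle, swap_comm a b]
  exact isThreeCycle_swap_mul_swap_same h.ab.symm h.bc h.ac

theorem exists_eq_threeCycle [Fintype α] {t : Perm α} (ht : t.IsThreeCycle) :
    ∃ a b c, DistinctTriple a b c ∧ t = threeCycle a b c := by
  obtain ⟨a, ha⟩ := ht.isCycle.nonempty_support
  have hnodup := ht.nodup_iff_mem_support.2 ha
  simp only [List.nodup_cons, List.mem_cons, List.not_mem_nil, or_false, not_or] at hnodup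
  exact ⟨a, t a, t (t a), ⟨hnodup.1.1, hnodup.2.1, hnodup.1.2⟩,
    ht.eq_swap_mul_swap_iff_mem_support.2 ha⟩

theorem swap_mul_eq_swap_mul_of_eq_threeCycle_mul (h : x = threeCycle a b c * y) :
    swap a b * x = swap b c * y := by
  rw [h, threeCycle, ← mul_assoc, ← mul_assoc, swap_mul_self, one_mul]

theorem threeCycle_apply_of_not_sameCycle (ha : ¬ x.SameCycle p a) (hb : ¬ x.SameCycle p b)
    (hc : ¬ x.SameCycle p c) {q : α} (hq : x.SameCycle p q) : threeCycle a b c q = q :=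
  threeCycle_apply_of_ne (fun h => ha (h ▸ hq)) (fun h => hb (h ▸ hq)) fun h => hc (h ▸ hq)

theorem sameCycle_threeCycle_mul_iff [Finite α] (hab : ¬ y.SameCycle a b) (hbc : ¬ y.SameCycle b c)
    (hca : ¬ y.SameCycle c a) (q : α) :
    (threeCycle a b c * y).SameCycle a q ↔
      y.SameCycle a q ∨ y.SameCycle b q ∨ y.SameCycle c q := by
  have hba : ¬ y.SameCycle b a := fun h => hab h.symm
  have hzab : ¬ (swap b c * y).SameCycle a b := by
    rw [sameCycle_swap_mul_iff hbc]
    tauto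
  rw [threeCycle, mul_assoc, sameCycle_swap_mul_iff hzab]
  simp only [sameCycle_swap_mul_iff hbc]
  have := SameCycle.refl y a
  have := SameCycle.refl y b
  tauto

end ThreeCycle

section Structure

variable {α : Type*} [Fintype α] [DecidableEq α] {x y : Perm α} {a b c p : α}

/-- `x = threeCycle a b c * y`, where the three different `y`-cycles of `a`, `b`, `c`, at least two
of them odd, are joined into a single `x`-cycle. -/
structure SplitsCycle (x y : Perm α) (a b c : α) : Prop where
  distinct : DistinctTriple a b c
  eq_mul : x = threeCycle a b c * y
  not_sameCycle_ab : ¬ y.SameCycle a b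
  not_sameCycle_bc : ¬ y.SameCycle b c
  not_sameCycle_ca : ¬ y.SameCycle c a
  sameCycle_iff : ∀ q, x.SameCycle a q ↔ y.SameCycle a q ∨ y.SameCycle b q ∨ y.SameCycle c q
  two_le : 2 ≤ (cycleSet y a).card % 2 + (cycleSet y b).card % 2 + (cycleSet y c).card % 2

/-- `x = threeCycle a b c * y`, where two even `x`-cycles, one through `a` and `b`, one through `c`,
correspond to two odd `y`-cycles, one through `a`, one through `b` and `c`. -/
structure ExchangesCycles (x y : Perm α) (a b c : α) : Prop where
  distinct : DistinctTriple a b c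
  eq_mul : x = threeCycle a b c * y
  sameCycle_ab : x.SameCycle a b
  not_sameCycle_ac : ¬ x.SameCycle a c
  even_a : Even (cycleSet x a).card
  even_c : Even (cycleSet x c).card
  odd_a : Odd (cycleSet y a).card
  odd_b : Odd (cycleSet y b).card
  sameCycle_bc : y.SameCycle b c

theorem oddCycleCount_threeCycle_mul (hab : ¬ y.SameCycle a b) (hbc : ¬ y.SameCycle b c)
    (hca : ¬ y.SameCycle c a) :
    oddCycleCount (threeCycle a b c * y) +
        ((cycleSet y a).card % 2 + (cycleSet y b).card % 2 + (cycleSet y c).card % 2) =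
      oddCycleCount y +
        ((cycleSet y a).card + (cycleSet y b).card + (cycleSet y c).card) % 2 := by
  have hba : ¬ y.SameCycle b a := fun h => hab h.symm
  have hzab : ¬ (swap b c * y).SameCycle a b := by
    rw [sameCycle_swap_mul_iff hbc]
    tauto
  have hinner := oddCycleCount_swap_mul hbc
  have houter := oddCycleCount_swap_mul hzab
  rw [card_cycleSet_swap_mul hbc, cycleSet_swap_mul_of_not_sameCycle hbc hba hca] at houter
  rw [threeCycle, mul_assoc]
  omega

namespace SplitsCycle

theorem rotate (h : SplitsCycle x y a b c) : SplitsCycle x y b c a where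
  distinct := h.distinct.rotate
  eq_mul := by rw [threeCycle_rotate h.distinct, h.eq_mul]
  not_sameCycle_ab := h.not_sameCycle_bc
  not_sameCycle_bc := h.not_sameCycle_ca
  not_sameCycle_ca := h.not_sameCycle_ab
  sameCycle_iff q := by
    have hab : x.SameCycle a b := (h.sameCycle_iff b).2 (Or.inr (Or.inl SameCycle.rfl))
    rw [show x.SameCycle b q ↔ x.SameCycle a q from ⟨hab.trans, hab.symm.trans⟩, h.sameCycle_iff]
    tauto
  two_le := by
    have := h.two_le
    omega

theorem of_odd_odd (hd : DistinctTriple a b c) (hxy : x = threeCycle a b c * y)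
    (hab : ¬ y.SameCycle a b) (hbc : ¬ y.SameCycle b c) (hca : ¬ y.SameCycle c a)
    (hb : Odd (cycleSet y b).card) (hc : Odd (cycleSet y c).card) : SplitsCycle x y a b c where
  distinct := hd
  eq_mul := hxy
  not_sameCycle_ab := hab
  not_sameCycle_bc := hbc
  not_sameCycle_ca := hca
  sameCycle_iff := hxy ▸ sameCycle_threeCycle_mul_iff hab hbc hca
  two_le := by
    simp only [Nat.odd_iff] at hb hc
    omega

theorem sameCycle_ab (h : SplitsCycle x y a b c) : x.SameCycle a b :=
  (h.sameCycle_iff b).2 (Or.inr (Or.inl SameCycle.rfl))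

theorem sameCycle_ac (h : SplitsCycle x y a b c) : x.SameCycle a c :=
  (h.sameCycle_iff c).2 (Or.inr (Or.inr SameCycle.rfl))

theorem card_cycleSet (h : SplitsCycle x y a b c) :
    (cycleSet x a).card = (cycleSet y a).card + (cycleSet y b).card + (cycleSet y c).card := by
  have hunion : cycleSet x a = cycleSet y a ∪ cycleSet y b ∪ cycleSet y c := by
    ext q
    simp only [mem_cycleSet, Finset.mem_union, h.sameCycle_iff, or_assoc]
  rw [hunion, Finset.card_union_of_disjoint, Finset.card_union_of_disjoint]
  · exact disjoint_cycleSet h.not_sameCycle_ab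
  · exact Finset.disjoint_union_left.2 ⟨(disjoint_cycleSet h.not_sameCycle_ca).symm,
      disjoint_cycleSet h.not_sameCycle_bc⟩

theorem oddCycleCount_eq (h : SplitsCycle x y a b c) : oddCycleCount y = oddCycleCount x + 2 := by
  have hcount := oddCycleCount_threeCycle_mul h.not_sameCycle_ab h.not_sameCycle_bc
    h.not_sameCycle_ca
  rw [← h.eq_mul] at hcount
  have := h.two_le
  omega

theorem odd_of_odd (h : SplitsCycle x y a b c) (hx : Odd (cycleSet x a).card) :
    Odd (cycleSet y a).card ∧ Odd (cycleSet y b).card ∧ Odd (cycleSet y c).card := by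
  have hcard := h.card_cycleSet
  have htwo := h.two_le
  simp only [Nat.odd_iff] at *
  omega

end SplitsCycle

theorem splitsCycle_of_sameCycle (hd : DistinctTriple a b c) (hxy : x = threeCycle a b c * y)
    (hab : x.SameCycle a b) (hac : x.SameCycle a c)
    (hcount : oddCycleCount x + 2 ≤ oddCycleCount y) : SplitsCycle x y a b c := by
  obtain ⟨z, hz⟩ : ∃ z, z = swap b c * y := ⟨_, rfl⟩
  have hzx : z = swap a b * x := hz.trans (swap_mul_eq_swap_mul_of_eq_threeCycle_mul hxy).symm
  have hx : x = swap a b * z := by rw [hzx, swap_mul_self_mul]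
  have hy : y = swap b c * z := by rw [hz, swap_mul_self_mul]
  have hzab : ¬ z.SameCycle a b := hzx ▸ not_sameCycle_swap_mul hd.ab hab
  have hzc : z.SameCycle a c ∨ z.SameCycle b c := by
    have := SameCycle.refl z a
    rw [hx, sameCycle_swap_mul_iff hzab] at hac
    tauto
  have hxcount := oddCycleCount_swap_mul hzab
  rw [← hx] at hxcount
  by_cases hzbc : z.SameCycle b c
  · have hbc : ¬ y.SameCycle b c := hy ▸ not_sameCycle_swap_mul hd.bc hzbc
    have hmono {p q} (h : y.SameCycle p q) : z.SameCycle p q :=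
      hz ▸ sameCycle_swap_mul_of_sameCycle hbc h
    have hab' : ¬ y.SameCycle a b := fun h => hzab (hmono h)
    have hca' : ¬ y.SameCycle c a := fun h => hzab ((hmono h).symm.trans hzbc.symm)
    refine ⟨hd, hxy, hab', hbc, hca', hxy ▸ sameCycle_threeCycle_mul_iff hab' hbc hca', ?_⟩
    have := oddCycleCount_threeCycle_mul hab' hbc hca'
    rw [← hxy] at this
    omega
  · have hzac := hzc.resolve_right hzbc
    have hycount := oddCycleCount_swap_mul hzbc
    rw [← hy, ← cycleSet_eq_iff.2 hzac] at hycount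
    omega

-- The `x`-cycle of `a` is cut by `swap a b` into the `y`-cycle of `a` and the arc through `b`, and
-- `swap b c` glues that arc to the `x`-cycle of `c`.
theorem exists_arc_of_not_sameCycle (hne : a ≠ b) (hxy : x = threeCycle a b c * y)
    (hab : x.SameCycle a b) (hac : ¬ x.SameCycle a c) : ∃ n : ℕ,
      (cycleSet x a).card = (cycleSet y a).card + n ∧
      (cycleSet y b).card = n + (cycleSet x c).card ∧ y.SameCycle b c ∧
      oddCycleCount x + (cycleSet y a).card % 2 + (cycleSet y b).card % 2 =
        oddCycleCount y + (cycleSet x a).card % 2 + (cycleSet x c).card % 2 := by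
  obtain ⟨z, hz⟩ : ∃ z, z = swap b c * y := ⟨_, rfl⟩
  have hzx : z = swap a b * x := hz.trans (swap_mul_eq_swap_mul_of_eq_threeCycle_mul hxy).symm
  have hx : x = swap a b * z := by rw [hzx, swap_mul_self_mul]
  have hy : y = swap b c * z := by rw [hz, swap_mul_self_mul]
  have hzab : ¬ z.SameCycle a b := hzx ▸ not_sameCycle_swap_mul hne hab
  have hmono {p q} (h : z.SameCycle p q) : x.SameCycle p q :=
    hx ▸ sameCycle_swap_mul_of_sameCycle hzab h
  have hzac : ¬ z.SameCycle a c := fun h => hac (hmono h)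
  have hzbc : ¬ z.SameCycle b c := fun h => hac (hab.trans (hmono h))
  have hxa := card_cycleSet_swap_mul hzab
  have hyb := card_cycleSet_swap_mul hzbc
  have hxcount := oddCycleCount_swap_mul hzab
  have hycount := oddCycleCount_swap_mul hzbc
  have hxc : cycleSet x c = cycleSet z c := hx ▸ cycleSet_swap_mul_of_not_sameCycle hzab hzac hzbc
  have hya : cycleSet y a = cycleSet z a :=
    hy ▸ cycleSet_swap_mul_of_not_sameCycle hzbc (fun h => hzab h.symm) fun h => hzac h.symm
  rw [← hx] at hxa hxcount
  rw [← hy] at hyb hycount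
  refine ⟨(cycleSet z b).card, hya ▸ hxa, hxc ▸ hyb, hy ▸ sameCycle_swap_mul_left_right hzbc, ?_⟩
  rw [hxc, hya]
  omega

namespace ExchangesCycles

theorem oddCycleCount_eq (h : ExchangesCycles x y a b c) :
    oddCycleCount y = oddCycleCount x + 2 := by
  obtain ⟨-, -, -, -, hcount⟩ := exists_arc_of_not_sameCycle h.distinct.ab h.eq_mul h.sameCycle_ab
    h.not_sameCycle_ac
  have ha := h.even_a
  have hc := h.even_c
  have ha' := h.odd_a
  have hb' := h.odd_b
  simp only [Nat.odd_iff, Nat.even_iff] at *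
  omega

theorem of_odd (hd : DistinctTriple a b c) (hxy : x = threeCycle a b c * y)
    (hab : x.SameCycle a b) (hac : ¬ x.SameCycle a c) (ha : Even (cycleSet x a).card)
    (hc : Even (cycleSet x c).card) (ha' : Odd (cycleSet y a).card) :
    ExchangesCycles x y a b c := by
  obtain ⟨n, hxa, hyb, hbc, -⟩ := exists_arc_of_not_sameCycle hd.ab hxy hab hac
  refine ⟨hd, hxy, hab, hac, ha, hc, ha', ?_, hbc⟩
  simp only [Nat.odd_iff, Nat.even_iff] at *
  omega

end ExchangesCycles

theorem exchangesCycles_of_not_sameCycle (hd : DistinctTriple a b c)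
    (hxy : x = threeCycle a b c * y) (hab : x.SameCycle a b) (hac : ¬ x.SameCycle a c)
    (hcount : oddCycleCount x + 2 ≤ oddCycleCount y) : ExchangesCycles x y a b c := by
  obtain ⟨n, -, -, hbc, hxycount⟩ := exists_arc_of_not_sameCycle hd.ab hxy hab hac
  refine ⟨hd, hxy, hab, hac, ?_, ?_, ?_, ?_, hbc⟩ <;> simp only [Nat.even_iff, Nat.odd_iff] <;>
    omega

theorem oddCycleCount_le_of_pairwise_not_sameCycle (hxy : x = threeCycle a b c * y)
    (hab : ¬ x.SameCycle a b) (hbc : ¬ x.SameCycle b c) (hac : ¬ x.SameCycle a c) :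
    oddCycleCount y ≤ oddCycleCount x := by
  have hzbc : ¬ (swap a b * x).SameCycle b c := by
    rw [sameCycle_swap_mul_iff hab]
    tauto
  have hinner := oddCycleCount_swap_mul hab
  have houter := oddCycleCount_swap_mul hzbc
  rw [swap_mul_eq_swap_mul_of_eq_threeCycle_mul hxy, swap_mul_self_mul] at houter
  rw [swap_mul_eq_swap_mul_of_eq_threeCycle_mul hxy] at hinner
  omega

theorem exists_splits_or_exchanges {t : Perm α} (ht : t.IsThreeCycle)
    (hcount : oddCycleCount (t * y) + 2 ≤ oddCycleCount y) :
    ∃ a b c, t = threeCycle a b c ∧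
      (SplitsCycle (t * y) y a b c ∨ ExchangesCycles (t * y) y a b c) := by
  have key {a b c : α} (hd : DistinctTriple a b c) (hta : t = threeCycle a b c)
      (hab : (t * y).SameCycle a b) :
      SplitsCycle (t * y) y a b c ∨ ExchangesCycles (t * y) y a b c := by
    by_cases hac : (t * y).SameCycle a c
    · exact Or.inl (splitsCycle_of_sameCycle hd (by rw [← hta]) hab hac hcount)
    · exact Or.inr (exchangesCycles_of_not_sameCycle hd (by rw [← hta]) hab hac hcount)
  obtain ⟨a, b, c, hd, hta⟩ := exists_eq_threeCycle ht
  have htb : t = threeCycle b c a := by rw [threeCycle_rotate hd, hta]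
  have htc : t = threeCycle c a b := by rw [threeCycle_rotate hd.rotate, htb]
  by_cases hab : (t * y).SameCycle a b
  · exact ⟨a, b, c, hta, key hd hta hab⟩
  by_cases hbc : (t * y).SameCycle b c
  · exact ⟨b, c, a, htb, key hd.rotate htb hbc⟩
  by_cases hca : (t * y).SameCycle c a
  · exact ⟨c, a, b, htc, key hd.rotate.rotate htc hca⟩
  have := oddCycleCount_le_of_pairwise_not_sameCycle (y := y) (by rw [← hta]) hab hbc
    fun h => hca h.symm
  omega

theorem oddCycleCount_le_add_two {t : Perm α} (ht : t.IsThreeCycle) (y : Perm α) :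
    oddCycleCount y ≤ oddCycleCount (t * y) + 2 := by
  by_contra! hlt
  obtain ⟨a, b, c, -, h | h⟩ := exists_splits_or_exchanges ht hlt.le <;>
    exact hlt.ne' h.oddCycleCount_eq

end Structure

/-! ### Hurwitz equivalence and reduced words -/

section HurwitzEquiv

variable {G : Type*} [Group G] {w w' : List G} {t u : G}

/-- Two words lie in the same orbit of the Hurwitz action. -/
def HurwitzEquiv (w w' : List G) : Prop := Relation.EqvGen HurwitzMove w w'

namespace HurwitzEquiv

theorem refl (w : List G) : HurwitzEquiv w w := Relation.EqvGen.refl w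

theorem symm (h : HurwitzEquiv w w') : HurwitzEquiv w' w := Relation.EqvGen.symm _ _ h

theorem trans {w'' : List G} (h : HurwitzEquiv w w') (h' : HurwitzEquiv w' w'') :
    HurwitzEquiv w w'' :=
  Relation.EqvGen.trans _ _ _ h h'

theorem move (l₁ l₂ : List G) (t u : G) :
    HurwitzEquiv (l₁ ++ t :: u :: l₂) (l₁ ++ u :: (u⁻¹ * t * u) :: l₂) :=
  Relation.EqvGen.rel _ _ ⟨l₁, l₂, t, u, rfl, rfl⟩

theorem lift {R : List G → List G → Prop} (hR : Equivalence R)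
    (hmove : ∀ l₁ l₂ t u, R (l₁ ++ t :: u :: l₂) (l₁ ++ u :: (u⁻¹ * t * u) :: l₂))
    (h : HurwitzEquiv w w') : R w w' := by
  refine hR.eqvGen_iff.1 (h.mono ?_)
  rintro _ _ ⟨l₁, l₂, t, u, rfl, rfl⟩
  exact hmove l₁ l₂ t u

theorem append_append (h : HurwitzEquiv w w') (l r : List G) :
    HurwitzEquiv (l ++ w ++ r) (l ++ w' ++ r) :=
  h.lift (R := fun w w' => HurwitzEquiv (l ++ w ++ r) (l ++ w' ++ r))
    ⟨fun _ => refl _, symm, trans⟩ fun l₁ l₂ t u => by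
      simpa using move (l ++ l₁) (l₂ ++ r) t u

theorem cons (h : HurwitzEquiv w w') (t : G) : HurwitzEquiv (t :: w) (t :: w') := by
  simpa using h.append_append [t] []

theorem append {v v' : List G} (h : HurwitzEquiv w w') (h' : HurwitzEquiv v v') :
    HurwitzEquiv (w ++ v) (w' ++ v') := by
  have hleft := h.append_append [] v
  have hright := h'.append_append w' []
  simp only [List.nil_append, List.append_nil] at hleft hright
  exact hleft.trans hright

theorem prod_eq (h : HurwitzEquiv w w') : w.prod = w'.prod :=
  h.lift (R := fun w w' => w.prod = w'.prod) ⟨fun _ => rfl, Eq.symm, Eq.trans⟩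
    fun l₁ l₂ t u => by simp [mul_assoc]

theorem length_eq (h : HurwitzEquiv w w') : w.length = w'.length :=
  h.lift (R := fun w w' => w.length = w'.length) ⟨fun _ => rfl, Eq.symm, Eq.trans⟩
    fun l₁ l₂ t u => by simp

theorem forall_mem_iff {P : G → Prop} (hP : ∀ t u, P u → (P (u⁻¹ * t * u) ↔ P t))
    (h : HurwitzEquiv w w') : (∀ t ∈ w, P t) ↔ ∀ t ∈ w', P t := by
  refine h.lift (R := fun w w' => (∀ t ∈ w, P t) ↔ ∀ t ∈ w', P t)
    ⟨fun _ => Iff.rfl, Iff.symm, Iff.trans⟩ fun l₁ l₂ t u => ?_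
  have := hP t u
  simp only [List.forall_mem_append, List.forall_mem_cons]
  tauto

theorem cons_move_front (l₁ l₂ : List G) (u : G) :
    HurwitzEquiv (l₁ ++ u :: l₂) (u :: (l₁.map (fun t => u⁻¹ * t * u) ++ l₂)) := by
  induction l₁ with
  | nil => exact refl _
  | cons t l ih => exact (ih.cons t).trans (move [] (l.map (fun t => u⁻¹ * t * u) ++ l₂) t u)

theorem cons_move_end (t : G) (w : List G) :
    HurwitzEquiv (t :: w) (w ++ [w.prod⁻¹ * t * w.prod]) := by
  induction w generalizing t with
  | nil => simpa using refl _
  | cons u w ih =>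
    refine (move [] w t u).trans (((ih (u⁻¹ * t * u)).cons u).trans ?_)
    simp only [List.prod_cons, mul_inv_rev, List.cons_append, mul_assoc]
    exact refl _

end HurwitzEquiv

/-- The orbit of `w` contains a word with first letter `u`. -/
def HasHurwitzHead (w : List G) (u : G) : Prop := ∃ w', HurwitzEquiv w (u :: w')

namespace HasHurwitzHead

theorem of_tail (h : HurwitzEquiv w (t :: w')) (h' : HasHurwitzHead w' u) : HasHurwitzHead w u := by
  obtain ⟨v, hv⟩ := h'
  exact ⟨_, h.trans ((hv.cons t).trans (HurwitzEquiv.move [] v t u))⟩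

theorem conj_of_tail (h : HurwitzEquiv w (t :: w')) (h' : HasHurwitzHead w' u) :
    HasHurwitzHead w (u⁻¹ * t * u) := by
  obtain ⟨v, hv⟩ := h'
  exact ⟨_, h.trans ((hv.cons t).trans ((HurwitzEquiv.move [] v t u).trans
    (HurwitzEquiv.cons_move_front [u] v _)))⟩

theorem conj_prod (h : HasHurwitzHead w t) : HasHurwitzHead w (w.prod⁻¹ * t * w.prod) := by
  obtain ⟨v, hv⟩ := h
  have hconj : v.prod⁻¹ * t * v.prod = w.prod⁻¹ * t * w.prod := by
    rw [hv.prod_eq, List.prod_cons]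
    group
  rw [← hconj]
  exact ⟨_, hv.trans ((HurwitzEquiv.cons_move_end t v).trans
    (HurwitzEquiv.cons_move_front v [] _))⟩

theorem conj_prod_pow (h : HasHurwitzHead w t) (n : ℕ) :
    HasHurwitzHead w ((w.prod ^ n)⁻¹ * t * w.prod ^ n) := by
  induction n with
  | zero => simpa using h
  | succ n ih =>
    rw [pow_succ]
    simpa only [mul_inv_rev, mul_assoc] using ih.conj_prod

end HasHurwitzHead

end HurwitzEquiv

section Reduced

variable {α : Type*} [Fintype α] [DecidableEq α] {w v : List (Perm α)} {t : Perm α}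

/-- `w` is a word in 3-cycles that attains the lower bound `card_le_oddCycleCount_prod` on its
length, i.e. a minimal factorization of its product. -/
structure IsReduced (w : List (Perm α)) : Prop where
  isThreeCycle : ∀ t ∈ w, t.IsThreeCycle
  card_eq : oddCycleCount w.prod + 2 * w.length = Fintype.card α

theorem card_le_oddCycleCount_prod (hw : ∀ t ∈ w, t.IsThreeCycle) :
    Fintype.card α ≤ oddCycleCount w.prod + 2 * w.length := by
  induction w with
  | nil => simp [oddCycleCount_one]
  | cons t w ih =>
    rw [List.forall_mem_cons] at hw
    have htail := ih hw.2
    have hhead := oddCycleCount_le_add_two hw.1 w.prod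
    rw [List.length_cons, List.prod_cons]
    omega

theorem isThreeCycle_conj_iff {t u : Perm α} :
    (u⁻¹ * t * u).IsThreeCycle ↔ t.IsThreeCycle := by
  have hconj := cycleType_conj (σ := t) (τ := u⁻¹)
  rw [inv_inv] at hconj
  rw [IsThreeCycle, IsThreeCycle, hconj]

theorem HurwitzEquiv.isReduced_iff (h : HurwitzEquiv w v) : IsReduced w ↔ IsReduced v := by
  have hthree := h.forall_mem_iff (P := fun t => t.IsThreeCycle) fun _ _ _ => isThreeCycle_conj_iff
  exact ⟨fun hw => ⟨hthree.1 hw.isThreeCycle, h.prod_eq ▸ h.length_eq ▸ hw.card_eq⟩,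
    fun hv => ⟨hthree.2 hv.isThreeCycle, h.prod_eq ▸ h.length_eq ▸ hv.card_eq⟩⟩

namespace IsReduced

theorem nil : IsReduced ([] : List (Perm α)) :=
  ⟨by simp, by simp [oddCycleCount_one]⟩

theorem head (h : IsReduced (t :: w)) : t.IsThreeCycle := h.isThreeCycle t List.mem_cons_self

theorem tail (h : IsReduced (t :: w)) : IsReduced w := by
  have hw := (List.forall_mem_cons.1 h.isThreeCycle).2
  have hbound := card_le_oddCycleCount_prod hw
  have hhead := oddCycleCount_le_add_two h.head w.prod
  have hcard := h.card_eq
  rw [List.length_cons, List.prod_cons] at hcard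
  exact ⟨hw, by omega⟩

theorem oddCycleCount_tail (h : IsReduced (t :: w)) :
    oddCycleCount w.prod = oddCycleCount (t * w.prod) + 2 := by
  have hcard := h.card_eq
  have htail := h.tail.card_eq
  rw [List.length_cons, List.prod_cons] at hcard
  omega

theorem cons (ht : t.IsThreeCycle) (h : IsReduced w)
    (hcount : oddCycleCount w.prod = oddCycleCount (t * w.prod) + 2) : IsReduced (t :: w) := by
  refine ⟨List.forall_mem_cons.2 ⟨ht, h.isThreeCycle⟩, ?_⟩
  have := h.card_eq
  rw [List.length_cons, List.prod_cons]
  omega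

theorem of_append (h : IsReduced (w ++ v)) : IsReduced v := by
  induction w with
  | nil => exact h
  | cons t w ih => exact ih h.tail

theorem eq_nil (h : IsReduced w) (hprod : w.prod = 1) : w = [] := by
  have := h.card_eq
  rw [hprod, oddCycleCount_one] at this
  exact List.length_eq_zero_iff.1 (by omega)

theorem splits_or_exchanges (h : IsReduced (t :: w)) :
    ∃ a b c, t = threeCycle a b c ∧ (SplitsCycle (t :: w).prod w.prod a b c ∨
      ExchangesCycles (t :: w).prod w.prod a b c) := by
  rw [List.prod_cons]
  exact exists_splits_or_exchanges h.head h.oddCycleCount_tail.ge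

theorem fixed_or_splits_or_exchanges (h : IsReduced (t :: w)) (p : α) :
    (∀ q, (t :: w).prod.SameCycle p q → t q = q) ∨ ∃ a b c, t = threeCycle a b c ∧
      (SplitsCycle (t :: w).prod w.prod a b c ∧ (t :: w).prod.SameCycle p a ∨
        ExchangesCycles (t :: w).prod w.prod a b c ∧
          ((t :: w).prod.SameCycle p a ∨ (t :: w).prod.SameCycle p c)) := by
  obtain ⟨a, b, c, ht, htype⟩ := h.splits_or_exchanges
  have hab : (t :: w).prod.SameCycle a b :=
    htype.elim SplitsCycle.sameCycle_ab ExchangesCycles.sameCycle_ab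
  by_cases hpa : (t :: w).prod.SameCycle p a
  · exact Or.inr ⟨a, b, c, ht, htype.imp (⟨·, hpa⟩) (⟨·, Or.inl hpa⟩)⟩
  by_cases hpc : (t :: w).prod.SameCycle p c
  · exact Or.inr ⟨a, b, c, ht, htype.imp (fun h => ⟨h, hpc.trans h.sameCycle_ac.symm⟩)
      (⟨·, Or.inr hpc⟩)⟩
  · exact Or.inl fun q => ht ▸
      threeCycle_apply_of_not_sameCycle hpa (fun h => hpa (h.trans hab.symm)) hpc

theorem fixed_or_splits_of_odd (h : IsReduced (t :: w)) {p : α}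
    (hp : Odd (cycleSet (t :: w).prod p).card) :
    (∀ q, (t :: w).prod.SameCycle p q → t q = q) ∨ ∃ a b c, t = threeCycle a b c ∧
      SplitsCycle (t :: w).prod w.prod a b c ∧ (t :: w).prod.SameCycle p a := by
  have not_even {r : α} (hpr : (t :: w).prod.SameCycle p r) :
      ¬ Even (cycleSet (t :: w).prod r).card :=
    Nat.not_even_iff_odd.2 (cycleSet_eq_iff.2 hpr ▸ hp)
  refine (h.fixed_or_splits_or_exchanges p).imp_right ?_
  rintro ⟨a, b, c, ht, hsplit | ⟨hexch, hpa | hpc⟩⟩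
  · exact ⟨a, b, c, ht, hsplit⟩
  · exact absurd hexch.even_a (not_even hpa)
  · exact absurd hexch.even_c (not_even hpc)

end IsReduced

end Reduced

section ThreeCycleHead

variable {α : Type*}

theorem pow_inv_apply_comm (x : Perm α) (n : ℕ) (p : α) : (x ^ n)⁻¹ (x p) = x ((x ^ n)⁻¹ p) := by
  have hcomm : Commute (x ^ n)⁻¹ x := ((Commute.refl x).pow_left n).inv_left
  exact Perm.ext_iff.1 hcomm.eq p

variable [DecidableEq α] {w : List (Perm α)} {x y : Perm α} {a b c p : α}

theorem HasHurwitzHead.threeCycle_pow_inv (h : HasHurwitzHead w (threeCycle a b c)) (n : ℕ) :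
    HasHurwitzHead w
      (threeCycle ((w.prod ^ n)⁻¹ a) ((w.prod ^ n)⁻¹ b) ((w.prod ^ n)⁻¹ c)) := by
  simpa only [inv_inv, ← conj_threeCycle] using h.conj_prod_pow n

theorem HasHurwitzHead.consecutive_of_sameCycle [Finite α]
    (h : HasHurwitzHead w (threeCycle a (w.prod a) (w.prod (w.prod a))))
    (hp : w.prod.SameCycle p a) :
    HasHurwitzHead w (threeCycle p (w.prod p) (w.prod (w.prod p))) := by
  obtain ⟨n, hn⟩ := hp.exists_nat_pow_eq
  have hn' : (w.prod ^ n)⁻¹ a = p := Perm.inv_eq_iff_eq.2 hn.symm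
  simpa only [pow_inv_apply_comm, hn'] using h.threeCycle_pow_inv n

theorem apply_eq_of_apply_ne (hxy : x = threeCycle a b c * y) (ha : y p ≠ a) (hb : y p ≠ b)
    (hc : y p ≠ c) : x p = y p := by
  rw [hxy, mul_apply, threeCycle_apply_of_ne ha hb hc]

open scoped Pointwise

theorem threeCycle_mem_stabilizer {S : Finset α} (ha : a ∈ S) (hb : b ∈ S) (hc : c ∈ S) :
    threeCycle a b c ∈ MulAction.stabilizer (Perm α) S := by
  have hswap {p q : α} (hp : p ∈ S) (hq : q ∈ S) : swap p q ∈ MulAction.stabilizer (Perm α) S :=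
    MulAction.mem_stabilizer_finset'.2 fun r hr => by
      rw [Perm.smul_def, swap_apply_def]
      split_ifs <;> assumption
  exact mul_mem (hswap ha hb) (hswap hb hc)

end ThreeCycleHead

/-! ### Permutations whose cycles are all odd -/

section OddCycles

variable {α : Type*} [Fintype α] [DecidableEq α] {w v : List (Perm α)} {x y t : Perm α}
  {a b c p : α}

theorem SplitsCycle.consecutive_of_tail (h : SplitsCycle (t :: w).prod w.prod a b c)
    (ha : Odd (cycleSet w.prod a).card) (hne : w.prod a ≠ a)
    (hhead : HasHurwitzHead w (threeCycle a (w.prod a) (w.prod (w.prod a)))) :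
    HasHurwitzHead (t :: w)
      (threeCycle a ((t :: w).prod a) ((t :: w).prod ((t :: w).prod a))) := by
  have hstep {q : α} (hq : w.prod.SameCycle a q) (hqa : q ≠ a) (r : α) (hr : w.prod r = q) :
      (t :: w).prod r = q := by
    rw [← hr] at hq hqa ⊢
    exact apply_eq_of_apply_ne h.eq_mul hqa (fun hb => h.not_sameCycle_ab (hb ▸ hq))
      fun hc => h.not_sameCycle_ca (hc ▸ hq).symm
  have hsame := sameCycle_self_apply w.prod a
  rw [hstep hsame hne a rfl, hstep hsame.apply_right (apply_apply_ne_self_of_odd ha hne) _ rfl]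
  exact hhead.of_tail (HurwitzEquiv.refl _)

theorem SplitsCycle.consecutive_of_fixed (h : SplitsCycle x y a b c) (ha : y a = a)
    (hb : y b = b) : threeCycle a (x a) (x (x a)) = threeCycle a b c := by
  have hxa : x a = b := by rw [h.eq_mul, mul_apply, ha, threeCycle_apply_left h.distinct]
  have hxb : x b = c := by rw [h.eq_mul, mul_apply, hb, threeCycle_apply_middle h.distinct]
  rw [hxa, hxb]

theorem IsReduced.hasHurwitzHead_of_odd (hw : IsReduced w) (hp : Odd (cycleSet w.prod p).card)
    (hne : w.prod p ≠ p) :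
    HasHurwitzHead w (threeCycle p (w.prod p) (w.prod (w.prod p))) := by
  induction w generalizing p with
  | nil => simp at hne
  | cons t w ih =>
    have hmul : (t :: w).prod = t * w.prod := List.prod_cons
    rcases hw.fixed_or_splits_of_odd hp with hfix | ⟨a, b, c, ht, hsplit, hpa⟩
    · have hyp : w.prod p = (t :: w).prod p :=
        apply_eq_of_forall_fixed hmul hfix SameCycle.rfl
      have hyxp : w.prod ((t :: w).prod p) = (t :: w).prod ((t :: w).prod p) :=
        apply_eq_of_forall_fixed hmul hfix (sameCycle_self_apply _ p)
      have hhead := ih hw.tail (cycleSet_eq_of_forall_fixed hmul hfix ▸ hp) (hyp ▸ hne)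
      rw [hyp, hyxp] at hhead
      exact hhead.of_tail (HurwitzEquiv.refl _)
    have hsplit_b := hsplit.rotate
    have hsplit_c := hsplit_b.rotate
    obtain ⟨hodd_a, hodd_b, hodd_c⟩ := hsplit.odd_of_odd (cycleSet_eq_iff.2 hpa ▸ hp)
    by_cases ha : w.prod a = a
    · by_cases hb : w.prod b = b
      · by_cases hc : w.prod c = c
        · refine HasHurwitzHead.consecutive_of_sameCycle ?_ hpa
          rw [hsplit.consecutive_of_fixed ha hb, ← ht]
          exact ⟨w, HurwitzEquiv.refl _⟩
        · have hhead := hsplit_c.consecutive_of_tail hodd_c hc (ih hw.tail hodd_c hc)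
          exact hhead.consecutive_of_sameCycle (hpa.trans hsplit.sameCycle_ac)
      · have hhead := hsplit_b.consecutive_of_tail hodd_b hb (ih hw.tail hodd_b hb)
        exact hhead.consecutive_of_sameCycle (hpa.trans hsplit.sameCycle_ab)
    · have hhead := hsplit.consecutive_of_tail hodd_a ha (ih hw.tail hodd_a ha)
      exact hhead.consecutive_of_sameCycle hpa

/-- All cycles of `x` have odd length. -/
def AllCyclesOdd (x : Perm α) : Prop := ∀ p, Odd (cycleSet x p).card

theorem SplitsCycle.allCyclesOdd (h : SplitsCycle x y a b c) (hx : AllCyclesOdd x) :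
    AllCyclesOdd y := by
  intro q
  obtain ⟨hodd_a, hodd_b, hodd_c⟩ := h.odd_of_odd (hx a)
  by_cases haq : x.SameCycle a q
  · rcases (h.sameCycle_iff q).1 haq with hq | hq | hq
    · exact cycleSet_eq_iff.2 hq ▸ hodd_a
    · exact cycleSet_eq_iff.2 hq ▸ hodd_b
    · exact cycleSet_eq_iff.2 hq ▸ hodd_c
  · rw [cycleSet_eq_of_forall_fixed h.eq_mul fun _ => threeCycle_apply_of_not_sameCycle
      (fun ha => haq ha.symm) (fun hb => haq (h.sameCycle_ab.trans hb.symm))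
      fun hc => haq (h.sameCycle_ac.trans hc.symm)]
    exact hx q

theorem AllCyclesOdd.tail (hx : AllCyclesOdd (t :: w).prod) (hw : IsReduced (t :: w)) :
    AllCyclesOdd w.prod := by
  obtain ⟨a, b, c, -, hsplit | hexch⟩ := hw.splits_or_exchanges
  · exact hsplit.allCyclesOdd hx
  · exact absurd hexch.even_a (Nat.not_even_iff_odd.2 (hx a))

theorem hurwitzEquiv_of_allCyclesOdd (hw : IsReduced w) (hv : IsReduced v)
    (hprod : w.prod = v.prod) (hodd : AllCyclesOdd w.prod) : HurwitzEquiv w v := by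
  induction hn : w.length generalizing w v with
  | zero =>
    obtain rfl := List.length_eq_zero_iff.1 hn
    rw [hv.eq_nil hprod.symm]
    exact HurwitzEquiv.refl _
  | succ n ih =>
    obtain ⟨p, hp⟩ : ∃ p, w.prod p ≠ p := by
      by_contra! hfix
      simp [hw.eq_nil (Perm.ext hfix)] at hn
    obtain ⟨w', hw'⟩ := hw.hasHurwitzHead_of_odd (hodd p) hp
    obtain ⟨v', hv'⟩ := hv.hasHurwitzHead_of_odd (hprod ▸ hodd p) (hprod ▸ hp)
    rw [← hprod] at hv'
    have hprod' := hw'.prod_eq.symm.trans (hprod.trans hv'.prod_eq)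
    rw [List.prod_cons, List.prod_cons, mul_right_inj] at hprod'
    have hw'red := hw'.isReduced_iff.1 hw
    have hlen := hw'.length_eq
    rw [List.length_cons] at hlen
    have := ih hw'red.tail (hv'.isReduced_iff.1 hv).tail hprod'
      (AllCyclesOdd.tail (hw'.prod_eq ▸ hodd) hw'red) (by omega)
    exact hw'.trans ((this.cons _).trans hv'.symm)

open scoped Pointwise

theorem IsReduced.mem_stabilizer_cycleSet (hw : IsReduced w) (hp : Odd (cycleSet w.prod p).card) :
    ∀ s ∈ w, s ∈ MulAction.stabilizer (Perm α) (cycleSet w.prod p) := by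
  induction w generalizing p with
  | nil => simp
  | cons t w ih =>
    rw [List.forall_mem_cons]
    rcases hw.fixed_or_splits_of_odd hp with hfix | ⟨a, b, c, rfl, hsplit, hpa⟩
    · have heq := cycleSet_eq_of_forall_fixed List.prod_cons hfix
      refine ⟨MulAction.mem_stabilizer_finset'.2 fun q hq => ?_, heq ▸ ih hw.tail (heq ▸ hp)⟩
      rwa [Perm.smul_def, hfix q (mem_cycleSet.1 hq)]
    · obtain ⟨hodd_a, hodd_b, hodd_c⟩ := hsplit.odd_of_odd (cycleSet_eq_iff.2 hpa ▸ hp)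
      refine ⟨threeCycle_mem_stabilizer (mem_cycleSet.2 hpa)
        (mem_cycleSet.2 (hpa.trans hsplit.sameCycle_ab))
        (mem_cycleSet.2 (hpa.trans hsplit.sameCycle_ac)), fun s hs => ?_⟩
      have hunion (q : α) : q ∈ cycleSet (threeCycle a b c :: w).prod p ↔
          q ∈ cycleSet w.prod a ∨ q ∈ cycleSet w.prod b ∨ q ∈ cycleSet w.prod c := by
        simp only [cycleSet_eq_iff.2 hpa, mem_cycleSet, hsplit.sameCycle_iff]
      have ih' {r : α} (hr : Odd (cycleSet w.prod r).card) (q : α) :=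
        MulAction.mem_stabilizer_finset.1 (ih hw.tail hr s hs) q
      exact MulAction.mem_stabilizer_finset.2 fun q => by
        rw [hunion, hunion, ih' hodd_a, ih' hodd_b, ih' hodd_c]

end OddCycles

/-! ### First letters on an even cycle -/

section EvenCycles

variable {α : Type*} {w : List (Perm α)} {x y t : Perm α} {a b c p q : α}

theorem distinctTriple_of_not_sameCycle (hp : x p ≠ p) (hpb : ¬ x.SameCycle p b) :
    DistinctTriple p (x p) b :=
  ⟨hp.symm, fun h => hpb (h ▸ sameCycle_self_apply x p), ne_of_not_sameCycle hpb⟩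

variable [DecidableEq α]

theorem inv_conj_threeCycle (g : Perm α) (a b c : α) :
    g⁻¹ * threeCycle a b c * g = threeCycle (g⁻¹ a) (g⁻¹ b) (g⁻¹ c) := by
  simpa only [inv_inv] using conj_threeCycle g⁻¹ a b c

theorem apply_eq_inv_threeCycle_apply (hxy : x = threeCycle a b c * y) (q : α) :
    y q = (threeCycle a b c)⁻¹ (x q) := by
  rw [Perm.eq_inv_iff_eq, hxy, mul_apply]

theorem apply_eq_of_apply_ne' (hxy : x = threeCycle a b c * y) (ha : x p ≠ a) (hb : x p ≠ b)
    (hc : x p ≠ c) : y p = x p := by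
  rw [apply_eq_inv_threeCycle_apply hxy, threeCycle_inv_apply_of_ne ha hb hc]

theorem HasHurwitzHead.exists_of_sameCycle [Finite α]
    (h : HasHurwitzHead w (threeCycle q (w.prod q) c)) (hqc : ¬ w.prod.SameCycle q c)
    (hpq : w.prod.SameCycle p q) :
    ∃ b, ¬ w.prod.SameCycle p b ∧ w.prod.SameCycle c b ∧
      HasHurwitzHead w (threeCycle p (w.prod p) b) := by
  obtain ⟨n, hn⟩ := hpq.exists_nat_pow_eq
  have hn' : (w.prod ^ n)⁻¹ q = p := Perm.inv_eq_iff_eq.2 hn.symm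
  have hc : w.prod.SameCycle c ((w.prod ^ n)⁻¹ c) := ⟨-n, by simp⟩
  refine ⟨_, fun hp => hqc (hpq.symm.trans (hp.trans hc.symm)), hc, ?_⟩
  simpa only [pow_inv_apply_comm, hn'] using h.threeCycle_pow_inv n

variable [Fintype α]

namespace ExchangesCycles

theorem apply_left (h : ExchangesCycles x y a b c) (hxa : x a ≠ b) : y a = x a :=
  apply_eq_of_apply_ne' h.eq_mul (apply_ne_self_of_even h.even_a) hxa
    fun hc => h.not_sameCycle_ac (hc ▸ sameCycle_self_apply x a)

theorem apply_apply_left_ne (h : ExchangesCycles x y a b c) (hxa : x a ≠ b) : x (x a) ≠ b := by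
  intro hxxa
  have hya : y a = x a := h.apply_left hxa
  have hyya : y (y a) = a := by
    rw [hya, apply_eq_inv_threeCycle_apply h.eq_mul, hxxa, threeCycle_inv_apply_middle h.distinct]
  exact apply_apply_ne_self_of_odd h.odd_a (hya ▸ apply_ne_self_of_even h.even_a) hyya

theorem apply_right (h : ExchangesCycles x y a b c) : y c = x c := by
  have hc := sameCycle_self_apply x c
  exact apply_eq_of_apply_ne' h.eq_mul (fun ha => h.not_sameCycle_ac (ha ▸ hc).symm)
    (fun hb => h.not_sameCycle_ac (h.sameCycle_ab.trans (hb ▸ hc).symm))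
    (apply_ne_self_of_even h.even_c)

theorem odd_c (h : ExchangesCycles x y a b c) : Odd (cycleSet y c).card :=
  cycleSet_eq_iff.2 h.sameCycle_bc ▸ h.odd_b

end ExchangesCycles

namespace IsReduced

theorem exists_exchanges_of_head (hw : IsReduced w) (hd : DistinctTriple a b c)
    (hhead : HasHurwitzHead w (threeCycle a b c)) (hab : w.prod.SameCycle a b)
    (hac : ¬ w.prod.SameCycle a c) :
    ∃ w', HurwitzEquiv w (threeCycle a b c :: w') ∧ IsReduced w' ∧
      ExchangesCycles w.prod w'.prod a b c := by
  obtain ⟨w', hw'⟩ := hhead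
  have hred := hw'.isReduced_iff.1 hw
  have hprod : w.prod = threeCycle a b c * w'.prod := by rw [hw'.prod_eq, List.prod_cons]
  exact ⟨w', hw', hred.tail,
    exchangesCycles_of_not_sameCycle hd hprod hab hac (hprod ▸ hred.oddCycleCount_tail.ge)⟩

theorem head_apply_apply_left (hw : IsReduced w) (hd : DistinctTriple a b c)
    (hhead : HasHurwitzHead w (threeCycle a b c)) (hab : w.prod.SameCycle a b)
    (hac : ¬ w.prod.SameCycle a c) (hxa : w.prod a ≠ b) :
    HasHurwitzHead w (threeCycle (w.prod (w.prod a)) b c) := by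
  obtain ⟨w', hw', hred, hexch⟩ := hw.exists_exchanges_of_head hd hhead hab hac
  by_cases hxxa : w.prod (w.prod a) = a
  · rwa [hxxa]
  have hxxa' := hexch.apply_apply_left_ne hxa
  have sameCycle_a := sameCycle_self_apply w.prod a
  have hne_c {q : α} (hq : w.prod.SameCycle a q) : c ≠ q := fun hc => hac (hc ▸ hq)
  have hya := hexch.apply_left hxa
  have hyxa : w'.prod (w.prod a) = w.prod (w.prod a) :=
    apply_eq_of_apply_ne' hexch.eq_mul hxxa hxxa' (hne_c sameCycle_a.apply_right).symm
  have hhead' := hred.hasHurwitzHead_of_odd hexch.odd_a (hya ▸ apply_ne_self_of_even hexch.even_a)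
  rw [hya, hyxa] at hhead'
  have hconj := hhead'.conj_of_tail hw'
  rwa [inv_conj_threeCycle, threeCycle_inv_apply_left,
    threeCycle_inv_apply_of_ne hd.ab.symm hxa.symm hxxa'.symm,
    threeCycle_inv_apply_of_ne hd.ac.symm (hne_c sameCycle_a)
      (hne_c sameCycle_a.apply_right)] at hconj

theorem exists_consecutive_head (hw : IsReduced w) (hd : DistinctTriple a b c)
    (hhead : HasHurwitzHead w (threeCycle a b c)) (hab : w.prod.SameCycle a b)
    (hac : ¬ w.prod.SameCycle a c) :
    ∃ q, w.prod.SameCycle a q ∧ HasHurwitzHead w (threeCycle q (w.prod q) c) := by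
  obtain ⟨n, hn⟩ := hab.exists_nat_pow_eq
  induction n using Nat.twoStepInduction generalizing a with
  | zero => exact absurd hn hd.ab
  | one => exact ⟨a, SameCycle.rfl, by rwa [show w.prod a = b by simpa using hn]⟩
  | more n ih _ =>
    by_cases hxa : w.prod a = b
    · exact ⟨a, SameCycle.rfl, by rwa [hxa]⟩
    obtain ⟨_, -, -, hexch⟩ := hw.exists_exchanges_of_head hd hhead hab hac
    have hsame : w.prod.SameCycle a (w.prod (w.prod a)) := (sameCycle_self_apply _ a).apply_right
    obtain ⟨q, hq, hhead'⟩ := ih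
      ⟨hexch.apply_apply_left_ne hxa, hd.bc, fun h => hac (h ▸ hsame)⟩
      (hw.head_apply_apply_left hd hhead hab hac hxa) (hsame.symm.trans hab)
      (fun h => hac (hsame.trans h)) (by simpa only [pow_add, pow_two, mul_apply] using hn)
    exact ⟨q, hsame.trans hq, hhead'⟩

theorem exists_exchanges_of_consecutive_head (hw : IsReduced w) (hp : w.prod p ≠ p)
    (hpb : ¬ w.prod.SameCycle p b) (hhead : HasHurwitzHead w (threeCycle p (w.prod p) b)) :
    ∃ w', HurwitzEquiv w (threeCycle p (w.prod p) b :: w') ∧ IsReduced w' ∧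
      ExchangesCycles w.prod w'.prod p (w.prod p) b :=
  hw.exists_exchanges_of_head (distinctTriple_of_not_sameCycle hp hpb) hhead
    (sameCycle_self_apply _ p) hpb

theorem exists_head_right (hw : IsReduced w) (hq : w.prod q ≠ q)
    (hhead : HasHurwitzHead w (threeCycle q (w.prod q) c)) (hqc : ¬ w.prod.SameCycle q c) :
    ∃ r, ¬ w.prod.SameCycle c r ∧ HasHurwitzHead w (threeCycle c (w.prod c) r) := by
  obtain ⟨w', hw', hred, hexch⟩ := hw.exists_exchanges_of_consecutive_head hq hqc hhead
  obtain ⟨r, hr⟩ : ∃ r, w.prod r = q := w.prod.surjective q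
  have hrq : w.prod.SameCycle r q := hr ▸ sameCycle_self_apply w.prod r
  have hcr : ¬ w.prod.SameCycle c r := fun h => hqc (hrq.symm.trans h.symm)
  have hyr : w'.prod r = c := by
    rw [apply_eq_inv_threeCycle_apply hexch.eq_mul, hr, threeCycle_inv_apply_left]
  have hodd : Odd (cycleSet w'.prod r).card :=
    cycleSet_eq_iff.2 (hyr ▸ sameCycle_self_apply w'.prod r) ▸ hexch.odd_c
  have hhead' := hred.hasHurwitzHead_of_odd hodd (hyr ▸ ne_of_not_sameCycle hcr)
  have hd := distinctTriple_of_not_sameCycle (apply_ne_self_of_even hexch.even_c) hcr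
  rw [hyr, hexch.apply_right, ← threeCycle_rotate hd.rotate.rotate] at hhead'
  exact ⟨r, hcr, hhead'.of_tail hw'⟩

theorem exists_head_of_exchanges (hw : IsReduced w)
    (hhead : HasHurwitzHead w (threeCycle a b c)) (hexch : ExchangesCycles w.prod y a b c)
    (hp : w.prod.SameCycle p a ∨ w.prod.SameCycle p c) :
    ∃ r, ¬ w.prod.SameCycle p r ∧ HasHurwitzHead w (threeCycle p (w.prod p) r) := by
  have hac := hexch.not_sameCycle_ac
  obtain ⟨q, hq, hhead'⟩ :=
    hw.exists_consecutive_head hexch.distinct hhead hexch.sameCycle_ab hac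
  have hqc : ¬ w.prod.SameCycle q c := fun h => hac (hq.trans h)
  rcases hp with hpa | hpc
  · obtain ⟨r, hpr, -, hhead_p⟩ := hhead'.exists_of_sameCycle hqc (hpa.trans hq)
    exact ⟨r, hpr, hhead_p⟩
  · have hqq := apply_ne_self_of_even (cycleSet_eq_iff.2 hq ▸ hexch.even_a)
    obtain ⟨s, hcs, hhead_c⟩ := hw.exists_head_right hqq hhead' hqc
    obtain ⟨r, hpr, -, hhead_p⟩ := hhead_c.exists_of_sameCycle hcs hpc
    exact ⟨r, hpr, hhead_p⟩

end IsReduced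

namespace SplitsCycle

theorem exists_even_of_even (h : SplitsCycle x y a b c) (hx : Even (cycleSet x a).card) :
    ∃ a' b' c', SplitsCycle x y a' b' c' ∧ x.SameCycle a a' ∧ Even (cycleSet y a').card := by
  have hcard := h.card_cycleSet
  by_cases ha : Even (cycleSet y a).card
  · exact ⟨a, b, c, h, SameCycle.rfl, ha⟩
  by_cases hb : Even (cycleSet y b).card
  · exact ⟨b, c, a, h.rotate, h.sameCycle_ab, hb⟩
  refine ⟨c, a, b, h.rotate.rotate, h.sameCycle_ac, ?_⟩
  simp only [Nat.even_iff] at *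
  omega

theorem odd_of_even (h : SplitsCycle x y a b c) (ha : Even (cycleSet y a).card) :
    Odd (cycleSet y b).card ∧ Odd (cycleSet y c).card := by
  have htwo := h.two_le
  simp only [Nat.odd_iff, Nat.even_iff] at *
  omega

theorem head_of_tail_even (h : SplitsCycle (t :: w).prod w.prod a b c) (hw : IsReduced w)
    (ha : Even (cycleSet w.prod a).card) (had : ¬ w.prod.SameCycle a q)
    (hhead : HasHurwitzHead w (threeCycle a (w.prod a) q)) :
    ¬ (t :: w).prod.SameCycle a q ∧ HasHurwitzHead (t :: w) (threeCycle a ((t :: w).prod a) q) := by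
  have hne := apply_ne_self_of_even ha
  obtain ⟨_, -, -, hexch⟩ := hw.exists_exchanges_of_consecutive_head hne had hhead
  obtain ⟨hodd_b, hodd_c⟩ := h.odd_of_even ha
  have not_sameCycle_q {r : α} (hr : Odd (cycleSet w.prod r).card) : ¬ w.prod.SameCycle r q :=
    fun hrq => Nat.not_even_iff_odd.2 hr (cycleSet_eq_iff.2 hrq ▸ hexch.even_c)
  have hsame := sameCycle_self_apply w.prod a
  have hxa : (t :: w).prod a = w.prod a := apply_eq_of_apply_ne h.eq_mul hne
    (fun hb => h.not_sameCycle_ab (hb ▸ hsame)) fun hc => h.not_sameCycle_ca (hc ▸ hsame).symm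
  refine ⟨?_, hxa ▸ hhead.of_tail (HurwitzEquiv.refl _)⟩
  simp only [h.sameCycle_iff, not_or]
  exact ⟨had, not_sameCycle_q hodd_b, not_sameCycle_q hodd_c⟩

end SplitsCycle

namespace IsReduced

theorem exists_head_of_even (hw : IsReduced w) (hp : Even (cycleSet w.prod p).card) :
    ∃ b, ¬ w.prod.SameCycle p b ∧ HasHurwitzHead w (threeCycle p (w.prod p) b) := by
  induction w generalizing p with
  | nil => exact absurd rfl (apply_ne_self_of_even hp)
  | cons t w ih =>
    have hmul : (t :: w).prod = t * w.prod := List.prod_cons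
    rcases hw.fixed_or_splits_or_exchanges p with
      hfix | ⟨a, b, c, ht, ⟨hsplit, hpa⟩ | ⟨hexch, hpac⟩⟩
    · have hcycle := cycleSet_eq_of_forall_fixed hmul hfix
      obtain ⟨d, hpd, hhead⟩ := ih hw.tail (hcycle ▸ hp)
      rw [← mem_cycleSet, hcycle, mem_cycleSet] at hpd
      rw [apply_eq_of_forall_fixed hmul hfix SameCycle.rfl] at hhead
      exact ⟨d, hpd, hhead.of_tail (HurwitzEquiv.refl _)⟩
    · obtain ⟨a', _, _, hsplit', haa', ha'⟩ :=
        hsplit.exists_even_of_even (cycleSet_eq_iff.2 hpa ▸ hp)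
      obtain ⟨d, had, hhead⟩ := ih hw.tail ha'
      obtain ⟨had', hhead'⟩ := hsplit'.head_of_tail_even hw.tail ha' had hhead
      obtain ⟨r, hpr, -, hhead_p⟩ := hhead'.exists_of_sameCycle had' (hpa.trans haa')
      exact ⟨r, hpr, hhead_p⟩
    · exact hw.exists_head_of_exchanges ⟨w, ht ▸ HurwitzEquiv.refl _⟩ hexch hpac

theorem head_apply_apply_right (hw : IsReduced w) (hp : w.prod p ≠ p)
    (hpb : ¬ w.prod.SameCycle p b) (hhead : HasHurwitzHead w (threeCycle p (w.prod p) b)) :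
    HasHurwitzHead w (threeCycle p (w.prod p) (w.prod (w.prod b))) := by
  obtain ⟨w', hw', hred, hexch⟩ := hw.exists_exchanges_of_consecutive_head hp hpb hhead
  by_cases hxxb : w.prod (w.prod b) = b
  · rwa [hxxb]
  have hne {q r : α} (hq : w.prod.SameCycle p q) (hr : w.prod.SameCycle b r) : q ≠ r :=
    fun h => hpb (hq.trans (h ▸ hr.symm))
  have hpp : w.prod.SameCycle p (w.prod p) := sameCycle_self_apply _ p
  have hb := sameCycle_self_apply w.prod b
  have hyb := hexch.apply_right
  have hyxb : w'.prod (w.prod b) = w.prod (w.prod b) :=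
    apply_eq_of_apply_ne' hexch.eq_mul (hne SameCycle.rfl hb.apply_right).symm
      (hne hpp hb.apply_right).symm hxxb
  have hhead' := hred.hasHurwitzHead_of_odd hexch.odd_c (hyb ▸ apply_ne_self_of_even hexch.even_c)
  rw [hyb, hyxb] at hhead'
  have hconj := hhead'.conj_of_tail hw'
  have hfix {q : α} (hq : w.prod.SameCycle p q) :
      (threeCycle b (w.prod b) (w.prod (w.prod b)))⁻¹ q = q :=
    threeCycle_inv_apply_of_ne (hne hq SameCycle.rfl) (hne hq hb) (hne hq hb.apply_right)
  rwa [inv_conj_threeCycle, threeCycle_inv_apply_left, hfix SameCycle.rfl, hfix hpp] at hconj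

theorem head_or_head_apply (hw : IsReduced w) (hp : w.prod p ≠ p)
    (hpb : ¬ w.prod.SameCycle p b) (hhead : HasHurwitzHead w (threeCycle p (w.prod p) b))
    (hbc : w.prod.SameCycle b c) :
    HasHurwitzHead w (threeCycle p (w.prod p) c) ∨
      HasHurwitzHead w (threeCycle p (w.prod p) (w.prod c)) := by
  obtain ⟨n, rfl⟩ := hbc.exists_nat_pow_eq
  clear hbc
  induction n with
  | zero => exact Or.inl (by simpa using hhead)
  | succ n ih =>
    rw [pow_succ', mul_apply]
    refine ih.symm.imp id fun hn => hw.head_apply_apply_right hp ?_ hn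
    rwa [sameCycle_pow_right]

end IsReduced

end EvenCycles

section Exchange

variable {α : Type*} [Fintype α] [DecidableEq α] {x y : Perm α} {a b c p q : α}

open scoped Pointwise

namespace ExchangesCycles

theorem of_consecutive (hp : Even (cycleSet x p).card) (hb : Even (cycleSet x b).card)
    (hpb : ¬ x.SameCycle p b) (hxy : x = threeCycle p (x p) b * y) :
    ExchangesCycles x y p (x p) b := by
  have hd := distinctTriple_of_not_sameCycle (apply_ne_self_of_even hp) hpb
  have hyp : y p = p := by
    rw [apply_eq_inv_threeCycle_apply hxy, threeCycle_inv_apply_middle hd]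
  exact of_odd hd hxy (sameCycle_self_apply x p) hpb hp hb (by simp [cycleSet_eq_singleton hyp])

theorem union_cycleSet_eq (h : ExchangesCycles x y a b c) :
    cycleSet x a ∪ cycleSet x c = cycleSet y a ∪ cycleSet y b := by
  obtain ⟨n, hxa, hyb, hbc, -⟩ := exists_arc_of_not_sameCycle h.distinct.ab h.eq_mul h.sameCycle_ab
    h.not_sameCycle_ac
  have ha : a ∈ cycleSet y a ∪ cycleSet y b := Finset.mem_union_left _ (self_mem_cycleSet y a)
  have hb : b ∈ cycleSet y a ∪ cycleSet y b := Finset.mem_union_right _ (self_mem_cycleSet y b)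
  have hc : c ∈ cycleSet y a ∪ cycleSet y b := Finset.mem_union_right _ (mem_cycleSet.2 hbc)
  have hstable : Set.MapsTo x (cycleSet y a ∪ cycleSet y b : Finset α)
      (cycleSet y a ∪ cycleSet y b : Finset α) := by
    intro q hq
    rw [h.eq_mul, mul_apply, Finset.mem_coe]
    refine (MulAction.mem_stabilizer_finset.1 (threeCycle_mem_stabilizer ha hb hc) _).2 ?_
    simpa [mem_cycleSet] using hq
  have hsub : cycleSet x a ∪ cycleSet x c ⊆ cycleSet y a ∪ cycleSet y b :=
    Finset.union_subset
      (fun q hq => mem_of_sameCycle_of_mapsTo hstable ha (mem_cycleSet.1 hq))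
      fun q hq => mem_of_sameCycle_of_mapsTo hstable hc (mem_cycleSet.1 hq)
  refine Finset.eq_of_subset_of_card_le hsub ((Finset.card_union_le _ _).trans ?_)
  rw [Finset.card_union_of_disjoint (disjoint_cycleSet h.not_sameCycle_ac)]
  omega

theorem odd_of_mem_union (h : ExchangesCycles x y a b c) (hq : q ∈ cycleSet x a ∪ cycleSet x c) :
    Odd (cycleSet y q).card := by
  rw [h.union_cycleSet_eq, Finset.mem_union, mem_cycleSet, mem_cycleSet] at hq
  rcases hq with hq | hq
  · exact cycleSet_eq_iff.2 hq ▸ h.odd_a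
  · exact cycleSet_eq_iff.2 hq ▸ h.odd_b

theorem cycleSet_eq_of_notMem_union (h : ExchangesCycles x y a b c)
    (hq : q ∉ cycleSet x a ∪ cycleSet x c) : cycleSet y q = cycleSet x q := by
  simp only [Finset.mem_union, mem_cycleSet, not_or] at hq
  exact cycleSet_eq_of_forall_fixed h.eq_mul fun _ =>
    threeCycle_apply_of_not_sameCycle (fun ha => hq.1 ha.symm)
      (fun hb => hq.1 (h.sameCycle_ab.trans hb.symm)) fun hc => hq.2 hc.symm

theorem evenCycles_eq (h : ExchangesCycles x y a b c) :
    evenCycles y = ((evenCycles x).erase (cycleSet x a)).erase (cycleSet x c) := by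
  ext C
  simp only [Finset.mem_erase, mem_evenCycles]
  constructor
  · rintro ⟨⟨q, rfl⟩, hC⟩
    have hq : q ∉ cycleSet x a ∪ cycleSet x c :=
      fun hq => Nat.not_even_iff_odd.2 (h.odd_of_mem_union hq) hC
    rw [h.cycleSet_eq_of_notMem_union hq] at hC ⊢
    simp only [Finset.mem_union, mem_cycleSet, not_or] at hq
    exact ⟨fun hc => hq.2 (cycleSet_eq_iff.1 hc.symm), fun ha => hq.1 (cycleSet_eq_iff.1 ha.symm),
      ⟨q, rfl⟩, hC⟩
  · rintro ⟨hc, ha, ⟨q, rfl⟩, hC⟩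
    refine ⟨⟨q, h.cycleSet_eq_of_notMem_union ?_⟩, hC⟩
    rw [ne_comm, ne_eq, cycleSet_eq_iff] at ha hc
    simp only [Finset.mem_union, mem_cycleSet, not_or]
    exact ⟨ha, hc⟩

theorem card_evenCycles (h : ExchangesCycles x y a b c) :
    (evenCycles y).card + 2 = (evenCycles x).card := by
  have ha : cycleSet x a ∈ evenCycles x := mem_evenCycles.2 ⟨⟨a, rfl⟩, h.even_a⟩
  have hc : cycleSet x c ∈ (evenCycles x).erase (cycleSet x a) :=
    Finset.mem_erase.2 ⟨fun hca => h.not_sameCycle_ac (cycleSet_eq_iff.1 hca.symm),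
      mem_evenCycles.2 ⟨⟨c, rfl⟩, h.even_c⟩⟩
  rw [h.evenCycles_eq, ← Finset.card_erase_add_one ha, ← Finset.card_erase_add_one hc]

end ExchangesCycles

theorem splitsCycle_of_consecutive (hp : Odd (cycleSet x p).card) (hne : x p ≠ p)
    (hxy : x = threeCycle p (x p) (x (x p)) * y) : SplitsCycle x y p (x p) (x (x p)) := by
  have hpp := apply_apply_ne_self_of_odd hp hne
  have hd : DistinctTriple p (x p) (x (x p)) :=
    ⟨hne.symm, fun h => hne (x.injective h.symm), hpp.symm⟩
  have hyp : y p = p := by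
    rw [apply_eq_inv_threeCycle_apply hxy, threeCycle_inv_apply_middle hd]
  have hyxp : y (x p) = x p := by
    rw [apply_eq_inv_threeCycle_apply hxy, threeCycle_inv_apply_right hd]
  refine SplitsCycle.rotate (SplitsCycle.of_odd_odd hd.rotate.rotate ?_
    (fun h => hd.ac (h.eq_of_right hyp).symm) (fun h => hd.ab (h.eq_of_left hyp))
    (fun h => hd.bc (h.eq_of_left hyxp)) ?_ ?_)
  · rw [threeCycle_rotate hd.rotate, threeCycle_rotate hd, ← hxy]
  · simp [cycleSet_eq_singleton hyp]
  · simp [cycleSet_eq_singleton hyxp]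

theorem exists_isReduced_of_allCyclesOdd (hx : AllCyclesOdd x) : ∃ w, IsReduced w ∧ w.prod = x := by
  induction hn : Fintype.card α - oddCycleCount x using Nat.strong_induction_on generalizing x with
  | _ n ih =>
  by_cases hone : x = 1
  · exact ⟨[], IsReduced.nil, hone.symm⟩
  obtain ⟨p, hp⟩ : ∃ p, x p ≠ p := by
    by_contra! hfix
    exact hone (Perm.ext hfix)
  obtain ⟨y, hxy⟩ : ∃ y, x = threeCycle p (x p) (x (x p)) * y := ⟨_, (mul_inv_cancel_left _ x).symm⟩
  have hsplit := splitsCycle_of_consecutive (hx p) hp hxy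
  have hcount := hsplit.oddCycleCount_eq
  have hbound := oddCycleCount_le_card y
  obtain ⟨w, hw, hwy⟩ :=
    ih (Fintype.card α - oddCycleCount y) (by omega) (hsplit.allCyclesOdd hx) rfl
  have hprod : threeCycle p (x p) (x (x p)) * w.prod = x := by rw [hwy, ← hxy]
  refine ⟨threeCycle p (x p) (x (x p)) :: w, IsReduced.cons
    (isThreeCycle_threeCycle hsplit.distinct) hw ?_, List.prod_cons.trans hprod⟩
  rw [hprod, hwy, hcount]

end Exchange

/-! ### Restriction of words to a stable set -/

section Filter

variable {G : Type*} [Group G] {w v : List G}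

namespace HurwitzEquiv

theorem cons_of_commute {t : G} {l : List G} (h : ∀ u ∈ l, Commute t u) :
    HurwitzEquiv (t :: l) (l ++ [t]) := by
  induction l with
  | nil => exact refl _
  | cons u l ih =>
    rw [List.forall_mem_cons] at h
    have hmove := move [] l t u
    rw [mul_assoc, inv_mul_eq_iff_eq_mul.2 h.1.eq] at hmove
    exact hmove.trans ((ih h.2).cons u)

theorem append_of_commute {l m : List G} (h : ∀ t ∈ l, ∀ u ∈ m, Commute t u) :
    HurwitzEquiv (l ++ m) (m ++ l) := by
  induction l with
  | nil => simpa using refl _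
  | cons t l ih =>
    rw [List.forall_mem_cons] at h
    have htail := (ih h.2).cons t
    have hhead := (cons_of_commute h.1).append (refl l)
    simp only [List.cons_append, List.append_assoc] at htail hhead ⊢
    exact htail.trans hhead

theorem filter_append_filter (P : G → Bool)
    (h : ∀ t ∈ w, ∀ u ∈ w, P t = true → P u = false → Commute t u) :
    HurwitzEquiv w (w.filter P ++ w.filter fun t => !P t) := by
  induction w with
  | nil => exact refl _
  | cons t w ih =>
    have htail := (ih fun v hv u hu =>
      h v (List.mem_cons_of_mem _ hv) u (List.mem_cons_of_mem _ hu)).cons t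
    cases hP : P t with
    | true => simpa [hP] using htail
    | false =>
      have hcomm : ∀ u ∈ w.filter P, Commute t u := fun u hu =>
        (h u (List.mem_cons_of_mem _ (List.mem_filter.1 hu).1) t List.mem_cons_self
          (List.mem_filter.1 hu).2 hP).symm
      have hhead := (cons_of_commute hcomm).append (refl (w.filter fun t => !P t))
      simp only [List.cons_append, List.append_assoc] at htail hhead
      simpa [hP] using htail.trans hhead

theorem lift_of_forall_mem {M : G → Prop} (hM : ∀ t u, M u → (M (u⁻¹ * t * u) ↔ M t))
    {R : List G → List G → Prop} (hR : Equivalence R)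
    (hmove : ∀ l₁ l₂ t u, M t → M u → R (l₁ ++ t :: u :: l₂) (l₁ ++ u :: (u⁻¹ * t * u) :: l₂))
    (h : HurwitzEquiv w v) (hw : ∀ t ∈ w, M t) : R w v := by
  have hiff {w v : List G} (h : HurwitzEquiv w v) := h.forall_mem_iff hM
  refine (h.lift (R := fun w v => HurwitzEquiv w v ∧ ((∀ t ∈ w, M t) → R w v))
    ⟨fun w => ⟨refl w, fun _ => hR.refl w⟩,
      fun h => ⟨h.1.symm, fun hv => hR.symm (h.2 ((hiff h.1).2 hv))⟩,
      fun h h' => ⟨h.1.trans h'.1, fun hw => hR.trans (h.2 hw) (h'.2 ((hiff h.1).1 hw))⟩⟩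
    fun l₁ l₂ t u => ⟨move l₁ l₂ t u, fun hw => hmove l₁ l₂ t u ?_ ?_⟩).2 hw <;>
  exact hw _ (by simp)

theorem filter {M : G → Prop} {P : G → Bool} (hM : ∀ t u, M u → (M (u⁻¹ * t * u) ↔ M t))
    (hP : ∀ t u, M u → P (u⁻¹ * t * u) = P t)
    (hcomm : ∀ t u, M t → M u → P t = true → P u = false → Commute t u)
    (h : HurwitzEquiv w v) (hw : ∀ t ∈ w, M t) : HurwitzEquiv (w.filter P) (v.filter P) := by
  refine h.lift_of_forall_mem hM (R := fun w v => HurwitzEquiv (w.filter P) (v.filter P))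
    ⟨fun _ => refl _, symm, trans⟩ (fun l₁ l₂ t u ht hu => ?_) hw
  have hconj := hP t u hu
  rw [List.filter_append, List.filter_append]
  cases hPt : P t <;> cases hPu : P u <;> simp only [List.filter_cons, hPt, hPu, hconj]
  · exact refl _
  · exact refl _
  · rw [mul_assoc, inv_mul_eq_iff_eq_mul.2 (hcomm t u ht hu hPt hPu).eq]
    exact refl _
  · exact move _ _ _ _

end HurwitzEquiv

end Filter

section Restriction

variable {α : Type*} [Fintype α] [DecidableEq α] {S : Finset α} {w v : List (Perm α)}
  {t u : Perm α}

open scoped Pointwise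

/-- The letters of `w` that move points of `S` only. -/
def lettersOn (S : Finset α) (w : List (Perm α)) : List (Perm α) :=
  w.filter fun t => t.support ⊆ S

/-- The letters of `w` that move some point outside `S`. -/
def lettersOff (S : Finset α) (w : List (Perm α)) : List (Perm α) :=
  w.filter fun t => !decide (t.support ⊆ S)

/-- `t` is a 3-cycle with `t S = S`, so that it moves only points of `S` or no point of `S`. -/
structure IsStableThreeCycle (S : Finset α) (t : Perm α) : Prop where
  mem_stabilizer : t ∈ MulAction.stabilizer (Perm α) S
  isThreeCycle : t.IsThreeCycle

theorem inv_conj_mem_iff {G : Type*} [Group G] {H : Subgroup G} {t u : G} (hu : u ∈ H) :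
    u⁻¹ * t * u ∈ H ↔ t ∈ H := by
  rw [H.mul_mem_cancel_right hu, H.mul_mem_cancel_left (inv_mem hu)]

theorem support_conj_subset_iff (hu : u ∈ MulAction.stabilizer (Perm α) S) :
    (u⁻¹ * t * u).support ⊆ S ↔ t.support ⊆ S := by
  have hconj : (u⁻¹ * t * u).support = u⁻¹ • t.support := by
    have h := support_conj_eq_smul_support (ConjAct.toConjAct u⁻¹) t
    rwa [ConjAct.toConjAct_smul, inv_inv, ConjAct.ofConjAct_toConjAct] at h
  have hS : u⁻¹ • S = S := inv_mem hu
  rw [hconj, ← hS, Finset.smul_finset_subset_smul_finset_iff, hS]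

namespace IsStableThreeCycle

theorem conj_iff (hu : IsStableThreeCycle S u) :
    IsStableThreeCycle S (u⁻¹ * t * u) ↔ IsStableThreeCycle S t := by
  have hmem := inv_conj_mem_iff (t := t) hu.mem_stabilizer
  exact ⟨fun h => ⟨hmem.1 h.1, isThreeCycle_conj_iff.1 h.2⟩,
    fun h => ⟨hmem.2 h.1, isThreeCycle_conj_iff.2 h.2⟩⟩

theorem apply_eq_self (ht : IsStableThreeCycle S t) (hS : ¬ t.support ⊆ S) {q : α} (hq : q ∈ S) :
    t q = q := by
  obtain ⟨a, b, c, hd, rfl⟩ := exists_eq_threeCycle ht.isThreeCycle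
  have hab := MulAction.mem_stabilizer_finset.1 ht.mem_stabilizer a
  have hbc := MulAction.mem_stabilizer_finset.1 ht.mem_stabilizer b
  rw [Perm.smul_def, threeCycle_apply_left hd] at hab
  rw [Perm.smul_def, threeCycle_apply_middle hd] at hbc
  have ha : a ∉ S := fun ha => hS fun r hr => by
    contrapose! hr
    rw [notMem_support]
    apply threeCycle_apply_of_ne <;> rintro rfl <;> tauto
  apply threeCycle_apply_of_ne <;> rintro rfl <;> tauto

theorem commute (hu : IsStableThreeCycle S u) (ht : t.support ⊆ S) (huS : ¬ u.support ⊆ S) :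
    Commute t u := by
  refine Disjoint.commute fun q => ?_
  by_cases hq : q ∈ S
  · exact Or.inr (hu.apply_eq_self huS hq)
  · exact Or.inl (notMem_support.1 fun h => hq (ht h))

end IsStableThreeCycle

theorem mem_lettersOn : t ∈ lettersOn S w ↔ t ∈ w ∧ t.support ⊆ S := by
  simp [lettersOn]

theorem mem_lettersOff : t ∈ lettersOff S w ↔ t ∈ w ∧ ¬ t.support ⊆ S := by
  simp [lettersOff]

theorem hurwitzEquiv_lettersOn_append_lettersOff (hw : ∀ t ∈ w, IsStableThreeCycle S t) :
    HurwitzEquiv w (lettersOn S w ++ lettersOff S w) :=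
  HurwitzEquiv.filter_append_filter (fun t : Perm α => decide (t.support ⊆ S))
    fun _ _ u hu ht huS => (hw u hu).commute (of_decide_eq_true ht) (of_decide_eq_false huS)

theorem IsReduced.lettersOn (h : IsReduced w) (hw : ∀ t ∈ w, IsStableThreeCycle S t) :
    IsReduced (lettersOn S w) := by
  have hcomm : HurwitzEquiv (ThreeCycleFactorization.lettersOn S w ++ lettersOff S w)
      (lettersOff S w ++ ThreeCycleFactorization.lettersOn S w) :=
    HurwitzEquiv.append_of_commute fun t ht u hu =>
      (hw u (mem_lettersOff.1 hu).1).commute (mem_lettersOn.1 ht).2 (mem_lettersOff.1 hu).2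
  exact IsReduced.of_append
    (((hurwitzEquiv_lettersOn_append_lettersOff hw).trans hcomm).isReduced_iff.1 h)

theorem HurwitzEquiv.lettersOn (h : HurwitzEquiv w v) (hw : ∀ t ∈ w, IsStableThreeCycle S t) :
    HurwitzEquiv (lettersOn S w) (lettersOn S v) :=
  h.filter (M := IsStableThreeCycle S) (fun _ _ hu => hu.conj_iff)
    (fun _ _ hu => by simp only [support_conj_subset_iff hu.mem_stabilizer])
    (fun _ _ _ hu htS huS => hu.commute (of_decide_eq_true htS) (of_decide_eq_false huS)) hw

theorem HurwitzEquiv.lettersOff (h : HurwitzEquiv w v) (hw : ∀ t ∈ w, IsStableThreeCycle S t) :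
    HurwitzEquiv (lettersOff S w) (lettersOff S v) :=
  h.filter (M := IsStableThreeCycle S) (fun _ _ hu => hu.conj_iff)
    (fun _ _ hu => by simp only [support_conj_subset_iff hu.mem_stabilizer])
    (fun _ _ ht _ htS huS => (ht.commute (by simpa using huS) (by simpa using htS)).symm) hw

theorem lettersOn_prod_apply_of_mem (hw : ∀ t ∈ w, IsStableThreeCycle S t) {q : α} (hq : q ∈ S) :
    (lettersOn S w).prod q = w.prod q := by
  have hfix : (lettersOff S w).prod ∈ MulAction.stabilizer (Perm α) q :=
    list_prod_mem fun t ht =>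
      (hw t (mem_lettersOff.1 ht).1).apply_eq_self (mem_lettersOff.1 ht).2 hq
  rw [(hurwitzEquiv_lettersOn_append_lettersOff hw).prod_eq, List.prod_append, mul_apply]
  exact congrArg _ (Eq.symm hfix)

theorem lettersOn_prod_apply_of_notMem (w : List (Perm α)) {q : α} (hq : q ∉ S) :
    (lettersOn S w).prod q = q := by
  have hfix : (lettersOn S w).prod ∈ MulAction.stabilizer (Perm α) q :=
    list_prod_mem fun t ht => notMem_support.1 fun h => hq ((mem_lettersOn.1 ht).2 h)
  exact hfix

namespace ExchangesCycles

variable {x : Perm α} {a b c : α}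

theorem support_subset (h : ExchangesCycles x t a b c) :
    (threeCycle a b c).support ⊆ cycleSet x a ∪ cycleSet x c := by
  intro q hq
  contrapose! hq
  simp only [Finset.mem_union, mem_cycleSet, not_or] at hq
  refine notMem_support.2 (threeCycle_apply_of_ne ?_ ?_ ?_) <;> rintro rfl
  exacts [hq.1 SameCycle.rfl, hq.1 h.sameCycle_ab, hq.2 SameCycle.rfl]

theorem isStableThreeCycle_of_mem_tail (h : ExchangesCycles x w.prod a b c) (hw : IsReduced w) :
    ∀ t ∈ w, IsStableThreeCycle (cycleSet x a ∪ cycleSet x c) t := by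
  refine fun t ht => ⟨?_, hw.isThreeCycle t ht⟩
  rw [h.union_cycleSet_eq]
  refine MulAction.mem_stabilizer_finset.2 fun q => ?_
  simp only [Finset.mem_union,
    MulAction.mem_stabilizer_finset.1 (hw.mem_stabilizer_cycleSet h.odd_a t ht),
    MulAction.mem_stabilizer_finset.1 (hw.mem_stabilizer_cycleSet h.odd_b t ht)]

theorem isStableThreeCycle_of_mem (h : ExchangesCycles x w.prod a b c) (hw : IsReduced w) :
    ∀ t ∈ threeCycle a b c :: w, IsStableThreeCycle (cycleSet x a ∪ cycleSet x c) t := by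
  refine List.forall_mem_cons.2 ⟨⟨threeCycle_mem_stabilizer ?_ ?_ ?_,
    isThreeCycle_threeCycle h.distinct⟩, h.isStableThreeCycle_of_mem_tail hw⟩
  · exact Finset.mem_union_left _ (self_mem_cycleSet x a)
  · exact Finset.mem_union_left _ (mem_cycleSet.2 h.sameCycle_ab)
  · exact Finset.mem_union_right _ (self_mem_cycleSet x c)

theorem isReduced_cons (h : ExchangesCycles x w.prod a b c) (hw : IsReduced w) :
    IsReduced (threeCycle a b c :: w) :=
  hw.cons (isThreeCycle_threeCycle h.distinct) (h.eq_mul ▸ h.oddCycleCount_eq)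

theorem allCyclesOdd_lettersOn (h : ExchangesCycles x w.prod a b c) (hw : IsReduced w) :
    AllCyclesOdd (lettersOn (cycleSet x a ∪ cycleSet x c) w).prod := by
  intro q
  by_cases hq : q ∈ cycleSet x a ∪ cycleSet x c
  · rw [cycleSet_congr (x := w.prod)]
    · exact h.odd_of_mem_union hq
    · refine fun r hr => lettersOn_prod_apply_of_mem (h.isStableThreeCycle_of_mem_tail hw) ?_
      rw [h.union_cycleSet_eq, Finset.mem_union, mem_cycleSet, mem_cycleSet] at hq ⊢
      exact hq.imp (·.trans hr) (·.trans hr)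
  · simp [cycleSet_eq_singleton (lettersOn_prod_apply_of_notMem w hq)]

theorem hurwitzEquiv_tail (h : ExchangesCycles x w.prod a b c) (hw : IsReduced w)
    (h' : ExchangesCycles x v.prod a b c) (hv : IsReduced v)
    (hequiv : HurwitzEquiv (threeCycle a b c :: w) (threeCycle a b c :: v)) :
    HurwitzEquiv w v := by
  have hprod : w.prod = v.prod := mul_left_cancel (h.eq_mul.symm.trans h'.eq_mul)
  have hstable := h.isStableThreeCycle_of_mem_tail hw
  have hstable' := h'.isStableThreeCycle_of_mem_tail hv
  have hoff := hequiv.lettersOff (h.isStableThreeCycle_of_mem hw)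
  have hhead := h.support_subset
  rw [lettersOff, lettersOff, List.filter_cons_of_neg (by simpa using hhead),
    List.filter_cons_of_neg (by simpa using hhead)] at hoff
  have hon := hurwitzEquiv_of_allCyclesOdd (hw.lettersOn hstable) (hv.lettersOn hstable')
    (Perm.ext fun q => ?_) (h.allCyclesOdd_lettersOn hw)
  · exact (hurwitzEquiv_lettersOn_append_lettersOff hstable).trans
      ((hon.append hoff).trans (hurwitzEquiv_lettersOn_append_lettersOff hstable').symm)
  · by_cases hq : q ∈ cycleSet x a ∪ cycleSet x c
    · rw [lettersOn_prod_apply_of_mem hstable hq, lettersOn_prod_apply_of_mem hstable' hq, hprod]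
    · rw [lettersOn_prod_apply_of_notMem w hq, lettersOn_prod_apply_of_notMem v hq]

theorem mem_stabilizer_of_equiv (h : ExchangesCycles x w.prod a b c) (hw : IsReduced w)
    (hequiv : HurwitzEquiv (threeCycle a b c :: w) v) :
    ∀ t ∈ v, t ∈ MulAction.stabilizer (Perm α) (cycleSet x a ∪ cycleSet x c) :=
  (hequiv.forall_mem_iff fun _ _ => inv_conj_mem_iff).1
    fun t ht => (h.isStableThreeCycle_of_mem hw t ht).mem_stabilizer

end ExchangesCycles

end Restriction

/-! ### The Clifford lift -/

section Clifford

variable {α R : Type*} [Ring R] {e : α → R} {G H : R} {g h : Perm α} {s s' : ℤˣ} {a b c : α}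

/-- The elements `e i` satisfy the relations of an orthonormal basis in a Clifford algebra. -/
structure IsCliffordFamily (e : α → R) : Prop where
  mul_self : ∀ i, e i * e i = 1
  anticomm : ∀ i j, i ≠ j → e i * e j = -(e j * e i)

/-- Conjugation by `G` (when it is a unit) permutes the elements `e i` as `g` does, up to the
common sign `s`. -/
def Implements (e : α → R) (G : R) (g : Perm α) (s : ℤˣ) : Prop :=
  ∀ q, G * e q = s • (e (g q) * G)

theorem implements_one (e : α → R) : Implements e 1 1 1 := fun q => by simp

theorem Implements.mul (hG : Implements e G g s) (hH : Implements e H h s') :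
    Implements e (G * H) (g * h) (s * s') := fun q => by
  rw [mul_assoc, hH, mul_smul_comm, ← mul_assoc, hG, smul_mul_assoc, smul_smul, mul_comm s',
    mul_apply, mul_assoc]

/-- The Clifford lift of the cycle `l.formPerm`: the factor `swap a b` of `l.formPerm` is lifted
to `e a - e b`. -/
def cycleLift (e : α → R) (l : List α) : R :=
  (List.zipWith (fun a b => e a - e b) l l.tail).prod

theorem cycleLift_cons_cons (e : α → R) (a b : α) (l : List α) :
    cycleLift e (a :: b :: l) = (e a - e b) * cycleLift e (b :: l) := by
  simp [cycleLift]

theorem cycleLift_append_singleton (e : α → R) (a : α) (l : List α) (c : α) :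
    cycleLift e (a :: l ++ [c]) =
      cycleLift e (a :: l) * (e ((a :: l).getLast (List.cons_ne_nil a l)) - e c) := by
  induction l generalizing a with
  | nil => simp [cycleLift]
  | cons b l ih =>
    rw [List.cons_append, List.cons_append, cycleLift_cons_cons, ← List.cons_append, ih,
      cycleLift_cons_cons, mul_assoc, List.getLast_cons_cons]

theorem Implements.mul_cycleLift (hG : Implements e G g 1) (l : List α) :
    G * cycleLift e l = cycleLift e (l.map g) * G := by
  induction l with
  | nil => simp [cycleLift]
  | cons a l ih =>
    cases l with
    | nil => simp [cycleLift]
    | cons b l =>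
      simp only [List.map_cons, cycleLift_cons_cons] at ih ⊢
      rw [← mul_assoc, mul_sub, hG, hG, one_smul, one_smul, ← sub_mul, mul_assoc, ih, mul_assoc]

namespace IsCliffordFamily

theorem isUnit_sub (he : IsCliffordFamily e) (htwo : IsUnit (2 : R)) (hab : a ≠ b) :
    IsUnit (e a - e b) := by
  have hsq : (e a - e b) ^ 2 = 2 := by
    rw [sq, mul_sub, sub_mul, sub_mul, he.mul_self, he.mul_self, he.anticomm a b hab,
      ← one_add_one_eq_two]
    abel
  rwa [← isUnit_pow_iff two_ne_zero, hsq]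

theorem isUnit_cycleLift (he : IsCliffordFamily e) (htwo : IsUnit (2 : R)) {l : List α}
    (hl : l.Nodup) : IsUnit (cycleLift e l) := by
  induction l with
  | nil => simp [cycleLift]
  | cons a l ih =>
    cases l with
    | nil => simp [cycleLift]
    | cons b l =>
      rw [cycleLift_cons_cons]
      exact (he.isUnit_sub htwo (List.ne_of_not_mem_cons hl.notMem)).mul (ih hl.of_cons)

theorem implements_sub [DecidableEq α] (he : IsCliffordFamily e) (a b : α) :
    Implements e (e a - e b) (swap a b) (-1) := fun q => by
  rw [Units.neg_smul, one_smul, mul_sub, sub_mul]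
  by_cases hqa : q = a
  · rw [hqa, swap_apply_left, he.mul_self, he.mul_self, neg_sub]
  by_cases hqb : q = b
  · rw [hqb, swap_apply_right, he.mul_self, he.mul_self, neg_sub]
  rw [swap_apply_of_ne_of_ne hqa hqb, he.anticomm q a hqa, he.anticomm q b hqb]
  abel

theorem implements_cycleLift [DecidableEq α] (he : IsCliffordFamily e) (l : List α) :
    Implements e (cycleLift e l) l.formPerm ((-1) ^ (l.length - 1)) := by
  induction l with
  | nil => simpa [cycleLift] using implements_one e
  | cons a l ih =>
    cases l with
    | nil => simpa [cycleLift] using implements_one e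
    | cons b l =>
      rw [cycleLift_cons_cons, List.formPerm_cons_cons]
      simpa [pow_succ'] using (he.implements_sub a b).mul ih

theorem cycleLift_rotate_one (he : IsCliffordFamily e) {l : List α} (hl : l.Nodup)
    (hne : l ≠ []) (heven : Even l.length) : cycleLift e (l.rotate 1) = -cycleLift e l := by
  classical
  obtain _ | ⟨a, _ | ⟨b, l⟩⟩ := l
  · exact absurd rfl hne
  · simp at heven
  have hsign : ((-1 : ℤˣ) ^ ((b :: l).length - 1)) = 1 := by
    refine Even.neg_one_pow ?_
    simp only [List.length_cons, Nat.even_iff] at heven ⊢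
    omega
  have himp := he.implements_cycleLift (b :: l)
  have ha := himp a
  have hlast := himp ((b :: l).getLast (List.cons_ne_nil b l))
  rw [List.formPerm_apply_of_notMem hl.notMem, hsign, one_smul] at ha
  rw [List.formPerm_apply_getLast, hsign, one_smul] at hlast
  rw [List.rotate_cons_succ, List.rotate_zero, cycleLift_append_singleton, mul_sub, ha, hlast,
    cycleLift_cons_cons, ← sub_mul, ← neg_mul, neg_sub]

end IsCliffordFamily

variable [Fintype α]

/-- The Clifford lift of a 3-cycle; see `threeCycleLift_threeCycle`. The formula is chosen to be
visibly natural under conjugation. -/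
def threeCycleLift (e : α → R) (t : Perm α) : R :=
  ∑ q, (1 - e q * e (t q)) - 2

theorem Implements.mul_threeCycleLift (hG : Implements e G g s) (t : Perm α) :
    G * threeCycleLift e t = threeCycleLift e (g * t * g⁻¹) * G := by
  have hterm (q : α) : G * (1 - e q * e (t q)) = (1 - e (g q) * e ((g * t * g⁻¹) (g q))) * G := by
    have hconj : (g * t * g⁻¹) (g q) = g (t q) := by simp
    rw [hconj, mul_sub, sub_mul, mul_one, one_mul, ← mul_assoc, hG, smul_mul_assoc, mul_assoc, hG,
      mul_smul_comm, smul_smul, Int.units_mul_self, one_smul, mul_assoc]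
  rw [threeCycleLift, threeCycleLift, mul_sub, sub_mul, Finset.mul_sum, Finset.sum_mul,
    ← Equiv.sum_comp g fun q => (1 - e q * e ((g * t * g⁻¹) q)) * G, mul_two, two_mul]
  exact congrArg (· - (G + G)) (Finset.sum_congr rfl fun q _ => hterm q)

/-- The product of the Clifford lifts of the letters of `w`. -/
def wordLift (e : α → R) (w : List (Perm α)) : R := (w.map (threeCycleLift e)).prod

theorem Implements.mul_wordLift (hG : Implements e G g s) (w : List (Perm α)) :
    G * wordLift e w = wordLift e (w.map (MulAut.conj g)) * G := by
  induction w with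
  | nil => simp [wordLift]
  | cons t w ih =>
    simp only [wordLift, List.map_cons, List.prod_cons, MulAut.conj_apply] at ih ⊢
    rw [← mul_assoc, hG.mul_threeCycleLift, mul_assoc (threeCycleLift e _), ih]
    exact (mul_assoc _ _ _).symm

namespace IsCliffordFamily

variable [DecidableEq α] {t : Perm α} {w v : List (Perm α)}

theorem threeCycleLift_threeCycle (he : IsCliffordFamily e) (h : DistinctTriple a b c) :
    threeCycleLift e (threeCycle a b c) = -((e a - e b) * (e b - e c)) := by
  have hsum : ∑ q, (1 - e q * e (threeCycle a b c q)) =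
      (1 - e a * e b) + ((1 - e b * e c) + (1 - e c * e a)) := by
    rw [← Finset.sum_subset (Finset.subset_univ {a, b, c}) fun q _ hq => ?_,
      Finset.sum_insert (by simp [h.ab, h.ac]), Finset.sum_pair h.bc, threeCycle_apply_left h,
      threeCycle_apply_middle h, threeCycle_apply_right]
    simp only [Finset.mem_insert, Finset.mem_singleton, not_or] at hq
    rw [threeCycle_apply_of_ne hq.1 hq.2.1 hq.2.2, he.mul_self, sub_self]
  rw [threeCycleLift, hsum, he.anticomm c a h.ac.symm, ← one_add_one_eq_two, mul_sub, sub_mul,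
    sub_mul, he.mul_self]
  abel

theorem implements_threeCycleLift (he : IsCliffordFamily e) (ht : t.IsThreeCycle) :
    Implements e (threeCycleLift e t) t 1 := by
  obtain ⟨a, b, c, h, rfl⟩ := exists_eq_threeCycle ht
  have himp := (he.implements_sub a b).mul (he.implements_sub b c)
  rw [Int.units_mul_self] at himp
  intro q
  rw [he.threeCycleLift_threeCycle h, neg_mul, mul_neg, smul_neg, himp q, threeCycle]

theorem isUnit_threeCycleLift (he : IsCliffordFamily e) (htwo : IsUnit (2 : R))
    (ht : t.IsThreeCycle) : IsUnit (threeCycleLift e t) := by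
  obtain ⟨a, b, c, h, rfl⟩ := exists_eq_threeCycle ht
  rw [he.threeCycleLift_threeCycle h]
  exact ((he.isUnit_sub htwo h.ab).mul (he.isUnit_sub htwo h.bc)).neg

theorem implements_wordLift (he : IsCliffordFamily e) (hw : ∀ t ∈ w, t.IsThreeCycle) :
    Implements e (wordLift e w) w.prod 1 := by
  induction w with
  | nil => exact implements_one e
  | cons t w ih =>
    rw [List.forall_mem_cons] at hw
    simpa [wordLift] using (he.implements_threeCycleLift hw.1).mul (ih hw.2)

theorem isUnit_wordLift (he : IsCliffordFamily e) (htwo : IsUnit (2 : R))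
    (hw : ∀ t ∈ w, t.IsThreeCycle) : IsUnit (wordLift e w) := by
  induction w with
  | nil => simp [wordLift]
  | cons t w ih =>
    rw [List.forall_mem_cons] at hw
    simpa [wordLift] using (he.isUnit_threeCycleLift htwo hw.1).mul (ih hw.2)

theorem wordLift_eq_of_hurwitzEquiv (he : IsCliffordFamily e) (h : HurwitzEquiv w v)
    (hw : ∀ t ∈ w, t.IsThreeCycle) : wordLift e w = wordLift e v := by
  refine h.lift_of_forall_mem (fun _ _ _ => isThreeCycle_conj_iff)
    (R := fun w v => wordLift e w = wordLift e v) ⟨fun _ => rfl, Eq.symm, Eq.trans⟩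
    (fun l₁ l₂ t u _ hu => ?_) hw
  have hmove : threeCycleLift e t * threeCycleLift e u =
      threeCycleLift e u * threeCycleLift e (u⁻¹ * t * u) := by
    rw [(he.implements_threeCycleLift hu).mul_threeCycleLift]
    simp [mul_assoc]
  simp only [wordLift, List.map_append, List.map_cons, List.prod_append, List.prod_cons]
  rw [← mul_assoc (threeCycleLift e t), hmove, mul_assoc]

end IsCliffordFamily

end Clifford

section Conjugation

variable {α : Type*} [Fintype α]

theorem isCliffordFamily_ι [DecidableEq α] : IsCliffordFamily fun i : α =>
    CliffordAlgebra.ι (QuadraticMap.weightedSumSquares ℚ fun _ : α => (1 : ℚ)) (Pi.single i 1) where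
  mul_self i := by
    rw [CliffordAlgebra.ι_sq_scalar]
    simp [QuadraticMap.weightedSumSquares_apply, Pi.single_apply]
  anticomm i j hij := by
    refine eq_neg_of_add_eq_zero_left ?_
    rw [CliffordAlgebra.ι_mul_ι_add_swap]
    simp [QuadraticMap.polar, QuadraticMap.weightedSumSquares_apply, Pi.single_apply, mul_add,
      Finset.sum_add_distrib, hij, hij.symm]

variable [DecidableEq α]

theorem cycleSet_eq_support_cycleOf {x : Perm α} {p : α} (hp : x p ≠ p) :
    cycleSet x p = (x.cycleOf p).support := by
  ext q
  rw [mem_cycleSet, mem_support_cycleOf_iff' hp]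

theorem map_toList_eq_rotate (x : Perm α) (p : α) :
    (x.toList p).map x = (x.toList p).rotate 1 := by
  have hiterate (n : ℕ) (p : α) : (List.iterate x p n).map x = List.iterate x (x p) n := by
    induction n generalizing p with
    | zero => rfl
    | succ n ih => simp [ih]
  rw [← toList_pow_apply_eq_rotate, pow_one, toList, toList, cycleOf_self_apply, hiterate]

/-- The Clifford lift of an even cycle `C` of `v.prod` is negated under conjugation by the lift of
`v`, so the lifts of `v` and of its conjugate by `C` differ by a sign. -/
theorem IsCliffordFamily.not_hurwitzEquiv_map_conj_cycleOf {R : Type*} [Ring R] [Nontrivial R]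
    {e : α → R} (he : IsCliffordFamily e) (htwo : IsUnit (2 : R)) {v : List (Perm α)}
    (hv : ∀ t ∈ v, t.IsThreeCycle) {p : α} (hp : Even (cycleSet v.prod p).card) :
    ¬ HurwitzEquiv v (v.map (MulAut.conj (v.prod.cycleOf p))) := by
  intro h
  have hmoved := apply_ne_self_of_even hp
  set l := v.prod.toList p with hl
  have hnodup : l.Nodup := nodup_toList v.prod p
  have hrotate : cycleLift e (l.rotate 1) = -cycleLift e l := by
    refine he.cycleLift_rotate_one hnodup ?_ ?_
    · rwa [Ne, hl, toList_eq_nil_iff, mem_support, not_not]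
    · rwa [hl, length_toList, ← cycleSet_eq_support_cycleOf hmoved]
  have hcycle : cycleLift e l * wordLift e v = wordLift e v * cycleLift e l := by
    have himp := he.implements_cycleLift l
    rw [hl, formPerm_toList, ← hl] at himp
    rw [himp.mul_wordLift, ← he.wordLift_eq_of_hurwitzEquiv h hv]
  have hword : wordLift e v * cycleLift e l = -(cycleLift e l * wordLift e v) := by
    rw [(he.implements_wordLift hv).mul_cycleLift, hl, map_toList_eq_rotate, ← hl, hrotate, neg_mul]
  have hzero : 2 * (cycleLift e l * wordLift e v) = 0 := by
    rw [two_mul]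
    nth_rw 1 [hcycle, hword]
    exact neg_add_cancel _
  have hunit := htwo.mul ((he.isUnit_cycleLift htwo hnodup).mul (he.isUnit_wordLift htwo hv))
  exact not_isUnit_zero (hzero ▸ hunit)

theorem not_hurwitzEquiv_map_conj_cycleOf {v : List (Perm α)} (hv : ∀ t ∈ v, t.IsThreeCycle)
    {p : α} (hp : Even (cycleSet v.prod p).card) :
    ¬ HurwitzEquiv v (v.map (MulAut.conj (v.prod.cycleOf p))) := by
  refine (isCliffordFamily_ι (α := α)).not_hurwitzEquiv_map_conj_cycleOf ?_ hv hp
  rw [← map_ofNat (algebraMap ℚ _) 2]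
  exact (isUnit_iff_ne_zero.2 two_ne_zero).map _

end Conjugation

section Distinguish

variable {α : Type*} [Fintype α] [DecidableEq α] {x : Perm α} {a c p b b' : α}
  {w w' : List (Perm α)}

open scoped Pointwise

theorem cycleSet_conj (g x : Perm α) (p : α) :
    cycleSet (g * x * g⁻¹) p = g • cycleSet x (g⁻¹ p) := by
  ext q
  rw [mem_cycleSet, sameCycle_conj, ← Finset.inv_smul_mem_iff, mem_cycleSet, Perm.smul_def]

theorem oddCycleCount_conj (g x : Perm α) : oddCycleCount (g * x * g⁻¹) = oddCycleCount x := by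
  have hcycles : cycles (g * x * g⁻¹) = g • cycles x := by
    ext C
    simp only [mem_cycles, cycleSet_conj, ← Finset.inv_smul_mem_iff, eq_inv_smul_iff]
    exact g⁻¹.exists_congr_left.trans (by simp)
  rw [oddCycleCount_eq_sum_mod_two, oddCycleCount_eq_sum_mod_two, hcycles, Finset.smul_finset_def,
    Finset.sum_image (MulAction.injective g).injOn]
  simp only [Finset.card_smul_finset]

theorem IsReduced.map_conj (hw : IsReduced w) (g : Perm α) :
    IsReduced (w.map (MulAut.conj g)) := by
  refine ⟨List.forall_mem_map.2 fun t ht => ?_, ?_⟩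
  · rw [IsThreeCycle, MulAut.conj_apply, cycleType_conj]
    exact hw.isThreeCycle t ht
  · rw [← map_list_prod, MulAut.conj_apply, oddCycleCount_conj, List.length_map, hw.card_eq]

theorem commute_cycleOf (x : Perm α) (p : α) : Commute (x.cycleOf p) x := by
  by_cases hp : x p = p
  · rw [(cycleOf_eq_one_iff x).2 hp]
    exact Commute.one_left x
  · exact self_mem_cycle_factors_commute
      (cycleOf_mem_cycleFactorsFinset_iff.2 (mem_support.2 hp))

theorem conj_cycleOf_threeCycle (hpb : ¬ x.SameCycle p b) :
    x.cycleOf b * threeCycle p (x p) b * (x.cycleOf b)⁻¹ = threeCycle p (x p) (x b) := by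
  rw [conj_threeCycle, cycleOf_apply_self,
    cycleOf_apply_of_not_sameCycle fun h => hpb h.symm,
    cycleOf_apply_of_not_sameCycle fun h => hpb (sameCycle_apply_right.1 h).symm]

theorem not_hurwitzEquiv_of_allCyclesOdd (hw : IsReduced w) (hw' : IsReduced w')
    (hodd : AllCyclesOdd w'.prod) (h : ExchangesCycles x w.prod p (x p) b) :
    ¬ HurwitzEquiv (threeCycle p (x p) b :: w) (threeCycle p (x p) (x b) :: w') := by
  intro hequiv
  set v := threeCycle p (x p) b :: w with hv
  have hprod : v.prod = x := h.eq_mul.symm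
  have hconj : v.map (MulAut.conj (x.cycleOf b)) =
      threeCycle p (x p) (x b) :: w.map (MulAut.conj (x.cycleOf b)) := by
    rw [hv, List.map_cons, MulAut.conj_apply, conj_cycleOf_threeCycle h.not_sameCycle_ac]
  have hfixed : (v.map (MulAut.conj (x.cycleOf b))).prod = v.prod := by
    rw [← map_list_prod, hprod, MulAut.conj_apply, (commute_cycleOf x b).eq, mul_inv_cancel_right]
  have htail : w'.prod = (w.map (MulAut.conj (x.cycleOf b))).prod := by
    rw [hequiv.prod_eq, hconj, List.prod_cons, List.prod_cons] at hfixed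
    exact (mul_left_cancel hfixed).symm
  have hall := hequiv.trans
    ((hurwitzEquiv_of_allCyclesOdd hw' (hw.map_conj _) htail hodd).cons _)
  rw [← hconj, ← hprod] at hall
  refine not_hurwitzEquiv_map_conj_cycleOf (h.isReduced_cons hw).isThreeCycle ?_ hall
  rw [hprod]
  exact h.even_c

theorem lettersOn_cons_of_subset {S : Finset α} {t : Perm α} (ht : t.support ⊆ S)
    (w : List (Perm α)) : lettersOn S (t :: w) = t :: lettersOn S w :=
  List.filter_cons_of_pos (by simpa using ht)

namespace ExchangesCycles

theorem cons_lettersOn_prod_apply (h : ExchangesCycles x w.prod a b c) (hw : IsReduced w) {q : α}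
    (hq : q ∈ cycleSet x a ∪ cycleSet x c) :
    (threeCycle a b c :: lettersOn (cycleSet x a ∪ cycleSet x c) w).prod q = x q := by
  rw [← lettersOn_cons_of_subset h.support_subset,
    lettersOn_prod_apply_of_mem (h.isStableThreeCycle_of_mem hw) hq, List.prod_cons, ← h.eq_mul]

theorem cycleSet_cons_lettersOn_prod (h : ExchangesCycles x w.prod a b c) (hw : IsReduced w)
    {q : α} (hq : q ∈ cycleSet x a ∪ cycleSet x c) :
    cycleSet (threeCycle a b c :: lettersOn (cycleSet x a ∪ cycleSet x c) w).prod q =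
      cycleSet x q := by
  refine cycleSet_congr fun r hr => h.cons_lettersOn_prod_apply hw ?_
  rw [Finset.mem_union, mem_cycleSet, mem_cycleSet] at hq ⊢
  exact hq.imp (·.trans hr) (·.trans hr)

theorem lettersOn (h : ExchangesCycles x w.prod a b c) (hw : IsReduced w) :
    ExchangesCycles (threeCycle a b c :: lettersOn (cycleSet x a ∪ cycleSet x c) w).prod
      (lettersOn (cycleSet x a ∪ cycleSet x c) w).prod a b c := by
  have ha := h.cycleSet_cons_lettersOn_prod hw
    (Finset.mem_union_left _ (self_mem_cycleSet x a))
  have hc := h.cycleSet_cons_lettersOn_prod hw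
    (Finset.mem_union_right _ (self_mem_cycleSet x c))
  refine of_odd h.distinct List.prod_cons ?_ ?_ ?_ ?_ (h.allCyclesOdd_lettersOn hw a)
  · rw [← mem_cycleSet, ha, mem_cycleSet]
    exact h.sameCycle_ab
  · rw [← mem_cycleSet, ha, mem_cycleSet]
    exact h.not_sameCycle_ac
  · rw [ha]
    exact h.even_a
  · rw [hc]
    exact h.even_c

theorem not_hurwitzEquiv_apply (h : ExchangesCycles x w.prod p (x p) b)
    (hw : IsReduced w) (h' : ExchangesCycles x w'.prod p (x p) (x b)) (hw' : IsReduced w') :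
    ¬ HurwitzEquiv (threeCycle p (x p) b :: w) (threeCycle p (x p) (x b) :: w') := by
  intro hequiv
  have hcycle : cycleSet x (x b) = cycleSet x b := cycleSet_eq_iff.2 (sameCycle_self_apply x b).symm
  have hstable' := h'.isStableThreeCycle_of_mem_tail hw'
  have hodd := h'.allCyclesOdd_lettersOn hw'
  have hsupport' := h'.support_subset
  rw [hcycle] at hstable' hodd hsupport'
  have hon := hequiv.lettersOn (h.isStableThreeCycle_of_mem hw)
  rw [lettersOn_cons_of_subset h.support_subset, lettersOn_cons_of_subset hsupport'] at hon
  have hrestrict := h.lettersOn hw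
  have hp := h.cons_lettersOn_prod_apply hw (Finset.mem_union_left _ (self_mem_cycleSet x p))
  have hb := h.cons_lettersOn_prod_apply hw (Finset.mem_union_right _ (self_mem_cycleSet x b))
  generalize (threeCycle p (x p) b :: ThreeCycleFactorization.lettersOn _ w).prod = z
    at hrestrict hp hb
  rw [← hp] at hrestrict
  rw [← hp, ← hb] at hon
  exact not_hurwitzEquiv_of_allCyclesOdd (hw.lettersOn (h.isStableThreeCycle_of_mem_tail hw))
    (hw'.lettersOn hstable') hodd hrestrict hon

theorem sameCycle_of_hurwitzEquiv (h : ExchangesCycles x w.prod p (x p) b)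
    (hw : IsReduced w) (h' : ExchangesCycles x w'.prod p (x p) b')
    (hequiv : HurwitzEquiv (threeCycle p (x p) b :: w) (threeCycle p (x p) b' :: w')) :
    x.SameCycle b b' := by
  have hstable := MulAction.mem_stabilizer_finset.1
    (h.mem_stabilizer_of_equiv hw hequiv _ List.mem_cons_self) (x p)
  rw [Perm.smul_def, threeCycle_apply_middle h'.distinct] at hstable
  have hb' := hstable.2 (Finset.mem_union_left _ (mem_cycleSet.2 (sameCycle_self_apply x p)))
  rw [Finset.mem_union, mem_cycleSet, mem_cycleSet] at hb'
  exact hb'.resolve_left h'.not_sameCycle_ac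

end ExchangesCycles

end Distinguish

/-! ### Counting orbits -/

section Orbits

variable {α : Type*} [Fintype α] [DecidableEq α] {x y : Perm α} {a b c p : α}

/-- The minimal factorizations of `x` into 3-cycles. -/
abbrev ReducedWord (x : Perm α) : Type _ := {w : List (Perm α) // IsReduced w ∧ w.prod = x}

/-- The orbits of the Hurwitz action on the minimal factorizations of `x` into 3-cycles. -/
abbrev HurwitzOrbit (x : Perm α) : Type _ :=
  Quot fun w w' : ReducedWord x => HurwitzMove w.1 w'.1

namespace HurwitzOrbit

theorem mk_eq_mk_of_hurwitzEquiv {w v : List (Perm α)} (h : HurwitzEquiv w v)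
    (hw : IsReduced w ∧ w.prod = x) (hv : IsReduced v ∧ v.prod = x) :
    (Quot.mk _ ⟨w, hw⟩ : HurwitzOrbit x) = Quot.mk _ ⟨v, hv⟩ := by
  induction h with
  | rel w v h => exact Quot.sound h
  | refl w => rfl
  | symm w v _ ih => exact (ih hv hw).symm
  | trans w u v hwu _ ih ih' =>
    have hu : IsReduced u ∧ u.prod = x :=
      ⟨(HurwitzEquiv.isReduced_iff hwu).1 hw.1, (HurwitzEquiv.prod_eq hwu).symm.trans hw.2⟩
    exact (ih hw hu).trans (ih' hu hv)

theorem mk_eq_mk_iff {w v : ReducedWord x} :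
    (Quot.mk _ w : HurwitzOrbit x) = Quot.mk _ v ↔ HurwitzEquiv w.1 v.1 := by
  refine ⟨fun h => ?_, fun h => mk_eq_mk_of_hurwitzEquiv h w.2 v.2⟩
  have hgen := Quot.eqvGen_exact h
  clear h
  induction hgen with
  | rel _ _ h => exact Relation.EqvGen.rel _ _ h
  | refl _ => exact HurwitzEquiv.refl _
  | symm _ _ _ ih => exact ih.symm
  | trans _ _ _ _ _ ih ih' => exact ih.trans ih'

/-- Prepending an exchanging 3-cycle `threeCycle a b c` to the minimal factorizations of `y`, on the
level of orbits. -/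
def cons (h : ExchangesCycles x y a b c) : HurwitzOrbit y → HurwitzOrbit x :=
  Quot.map
    (fun w => ⟨threeCycle a b c :: w.1, ExchangesCycles.isReduced_cons (w.2.2.symm ▸ h) w.2.1, by
      rw [List.prod_cons, w.2.2, h.eq_mul]⟩)
    (by
      rintro ⟨_, _⟩ ⟨_, _⟩ ⟨l₁, l₂, t, u, rfl, rfl⟩
      exact ⟨threeCycle a b c :: l₁, l₂, t, u, rfl, rfl⟩)

theorem cons_injective (h : ExchangesCycles x y a b c) : Function.Injective (cons h) := by
  rintro ⟨w, hw, rfl⟩ ⟨v, hv, hvw⟩ hcons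
  exact mk_eq_mk_iff.2 (h.hurwitzEquiv_tail hw (by rwa [hvw]) hv (mk_eq_mk_iff.1 hcons))

theorem sameCycle_of_cons_eq_cons {y' : Perm α} {b' : α} (h : ExchangesCycles x y p (x p) b)
    (h' : ExchangesCycles x y' p (x p) b') (q : HurwitzOrbit y) (q' : HurwitzOrbit y') :
    cons h q = cons h' q' → x.SameCycle b b' := by
  obtain ⟨w, hw, rfl⟩ := q
  obtain ⟨w', -, rfl⟩ := q'
  exact fun hq => h.sameCycle_of_hurwitzEquiv hw h' (mk_eq_mk_iff.1 hq)

theorem cons_ne_cons_apply {y' : Perm α} (h : ExchangesCycles x y p (x p) b)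
    (h' : ExchangesCycles x y' p (x p) (x b)) (q : HurwitzOrbit y) (q' : HurwitzOrbit y') :
    cons h q ≠ cons h' q' := by
  obtain ⟨w, hw, rfl⟩ := q
  obtain ⟨w', hw', rfl⟩ := q'
  exact fun hq => h.not_hurwitzEquiv_apply hw h' hw' (mk_eq_mk_iff.1 hq)

theorem card_eq_one_of_allCyclesOdd (hx : AllCyclesOdd x) : Nat.card (HurwitzOrbit x) = 1 := by
  obtain ⟨w, hw, rfl⟩ := exists_isReduced_of_allCyclesOdd hx
  refine Nat.card_eq_one_iff_exists.2 ⟨Quot.mk _ ⟨w, hw, rfl⟩, ?_⟩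
  rintro ⟨v, hv, hvw⟩
  exact mk_eq_mk_iff.2 (hurwitzEquiv_of_allCyclesOdd hv hw hvw (by rwa [hvw]))

end HurwitzOrbit

/-- A chosen point on the even cycle `C`. -/
noncomputable def evenCyclePoint {C : Finset α} (hC : C ∈ evenCycles x) : α :=
  (mem_evenCycles.1 hC).1.choose

theorem cycleSet_evenCyclePoint {C : Finset α} (hC : C ∈ evenCycles x) :
    cycleSet x (evenCyclePoint hC) = C :=
  (mem_evenCycles.1 hC).1.choose_spec

/-- The choices for the first letter `threeCycle p (x p) b` of a minimal factorization of `x`, up to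
Hurwitz moves, when `p` lies on an even cycle: the other even cycle to which `b` belongs, and one
of the two parity classes of points on that cycle. -/
abbrev PartnerIndex (x : Perm α) (p : α) : Type _ :=
  {C // C ∈ (evenCycles x).erase (cycleSet x p)} × Bool

namespace PartnerIndex

variable (i : PartnerIndex x p)

/-- A point in the cycle and the parity class encoded by `i`. -/
noncomputable def partner : α :=
  bif i.2 then x (evenCyclePoint (Finset.mem_of_mem_erase i.1.2))
  else evenCyclePoint (Finset.mem_of_mem_erase i.1.2)

/-- The cofactor of `x` that remains after the first letter encoded by `i`. -/
noncomputable def cofactor : Perm α := (threeCycle p (x p) i.partner)⁻¹ * x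

theorem cycleSet_partner : cycleSet x i.partner = i.1.1 := by
  have hpoint := cycleSet_evenCyclePoint (Finset.mem_of_mem_erase i.1.2)
  obtain ⟨C, _ | _⟩ := i
  · exact hpoint
  · exact (cycleSet_eq_iff.2 (sameCycle_self_apply x _).symm).trans hpoint

theorem not_sameCycle_partner : ¬ x.SameCycle p i.partner := by
  rw [← cycleSet_eq_iff, cycleSet_partner]
  exact (Finset.ne_of_mem_erase i.1.2).symm

theorem exchangesCycles_cofactor (hp : Even (cycleSet x p).card) :
    ExchangesCycles x i.cofactor p (x p) i.partner := by
  have heven : Even (cycleSet x i.partner).card := by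
    rw [cycleSet_partner]
    exact (mem_evenCycles.1 (Finset.mem_of_mem_erase i.1.2)).2
  exact .of_consecutive hp heven i.not_sameCycle_partner (mul_inv_cancel_left _ _).symm

theorem card_eq (hp : Even (cycleSet x p).card) :
    Fintype.card (PartnerIndex x p) = ((evenCycles x).card - 1) * 2 := by
  rw [Fintype.card_prod, Fintype.card_coe, Fintype.card_bool,
    Finset.card_erase_of_mem (mem_evenCycles.2 ⟨⟨p, rfl⟩, hp⟩)]

end PartnerIndex

theorem IsReduced.exists_hasHurwitzHead_partner {w : List (Perm α)} (hw : IsReduced w)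
    (hp : Even (cycleSet w.prod p).card) :
    ∃ i : PartnerIndex w.prod p, HasHurwitzHead w (threeCycle p (w.prod p) i.partner) := by
  have hne := apply_ne_self_of_even hp
  obtain ⟨b, hpb, hb⟩ := hw.exists_head_of_even hp
  obtain ⟨_, -, -, hexch⟩ := hw.exists_exchanges_of_consecutive_head hne hpb hb
  have hC : cycleSet w.prod b ∈ (evenCycles w.prod).erase (cycleSet w.prod p) :=
    Finset.mem_erase.2 ⟨fun h => hpb (cycleSet_eq_iff.1 h).symm,
      mem_evenCycles.2 ⟨⟨b, rfl⟩, hexch.even_c⟩⟩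
  have hpoint : w.prod.SameCycle b (evenCyclePoint (Finset.mem_of_mem_erase hC)) :=
    cycleSet_eq_iff.1 (cycleSet_evenCyclePoint _).symm
  rcases hw.head_or_head_apply hne hpb hb hpoint with h | h
  · exact ⟨(⟨_, hC⟩, false), h⟩
  · exact ⟨(⟨_, hC⟩, true), h⟩

namespace HurwitzOrbit

open PartnerIndex

/-- The orbit of factorizations of `x` with a given first letter and a given orbit of the rest. -/
noncomputable def ofPartner (hp : Even (cycleSet x p).card) :
    (Σ i : PartnerIndex x p, HurwitzOrbit i.cofactor) → HurwitzOrbit x :=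
  fun s => cons (s.1.exchangesCycles_cofactor hp) s.2

theorem ofPartner_injective (hp : Even (cycleSet x p).card) :
    Function.Injective (ofPartner hp) := by
  rintro ⟨i, q⟩ ⟨j, r⟩ (hqr : cons _ q = cons _ r)
  have hcycle : i.1 = j.1 := by
    rw [Subtype.ext_iff, ← i.cycleSet_partner, ← j.cycleSet_partner, cycleSet_eq_iff]
    exact sameCycle_of_cons_eq_cons _ _ q r hqr
  obtain ⟨C, ε⟩ := i
  obtain ⟨D, δ⟩ := j
  obtain rfl : C = D := hcycle
  match ε, δ with
  | false, true =>
    exact absurd hqr (cons_ne_cons_apply (exchangesCycles_cofactor (C, false) hp)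
      (exchangesCycles_cofactor (C, true) hp) q r)
  | true, false =>
    exact absurd hqr.symm (cons_ne_cons_apply (exchangesCycles_cofactor (C, false) hp)
      (exchangesCycles_cofactor (C, true) hp) r q)
  | false, false | true, true => rw [cons_injective _ hqr]

theorem ofPartner_surjective (hp : Even (cycleSet x p).card) :
    Function.Surjective (ofPartner hp) := by
  rintro ⟨w, hw, rfl⟩
  obtain ⟨i, hi⟩ := hw.exists_hasHurwitzHead_partner hp
  obtain ⟨v, hwv, hv, hexch⟩ := hw.exists_exchanges_of_consecutive_head (apply_ne_self_of_even hp)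
    i.not_sameCycle_partner hi
  have hprod : v.prod = i.cofactor := eq_inv_mul_iff_mul_eq.2 hexch.eq_mul.symm
  exact ⟨⟨i, Quot.mk _ ⟨v, hv, hprod⟩⟩, mk_eq_mk_iff.2 hwv.symm⟩

end HurwitzOrbit

theorem prod_range_add_succ (k : ℕ) :
    ∏ i ∈ Finset.range (k + 1), (k + 1 + 1 + i)
      = (2 * k + 1) * 2 * ∏ i ∈ Finset.range k, (k + 1 + i) := by
  refine Nat.eq_of_mul_eq_mul_left k.succ_pos ?_
  calc (k + 1) * ∏ i ∈ Finset.range (k + 1), (k + 1 + 1 + i)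
      = ∏ i ∈ Finset.range (k + 2), (k + 1 + i) := by
        rw [Finset.prod_range_succ' _ (k + 1), add_zero, mul_comm]
        congr! 2 with i
        ring
    _ = (k + 1) * ((2 * k + 1) * 2 * ∏ i ∈ Finset.range k, (k + 1 + i)) := by
        rw [Finset.prod_range_succ, Finset.prod_range_succ]
        ring

theorem prod_range_add_pos (k : ℕ) : 0 < ∏ i ∈ Finset.range k, (k + 1 + i) :=
  Finset.prod_pos fun i _ => by omega

theorem card_hurwitzOrbit {k : ℕ} (hx : (evenCycles x).card = 2 * k) :
    Nat.card (HurwitzOrbit x) = ∏ i ∈ Finset.range k, (k + 1 + i) := by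
  induction k generalizing x with
  | zero =>
    have hempty : evenCycles x = ∅ := Finset.card_eq_zero.1 hx
    have hodd : AllCyclesOdd x := fun p => Nat.not_even_iff_odd.1 fun hp =>
      Finset.eq_empty_iff_forall_notMem.1 hempty _ (mem_evenCycles.2 ⟨⟨p, rfl⟩, hp⟩)
    exact HurwitzOrbit.card_eq_one_of_allCyclesOdd hodd
  | succ k ih =>
    obtain ⟨A, hA⟩ : (evenCycles x).Nonempty := Finset.card_pos.1 (by omega)
    obtain ⟨⟨p, rfl⟩, hp⟩ := mem_evenCycles.1 hA
    have hcofactor (i : PartnerIndex x p) :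
        Nat.card (HurwitzOrbit i.cofactor) = ∏ i ∈ Finset.range k, (k + 1 + i) := by
      have hcard := (i.exchangesCycles_cofactor hp).card_evenCycles
      exact ih (by omega)
    have hfinite (i : PartnerIndex x p) : Finite (HurwitzOrbit i.cofactor) :=
      Nat.finite_of_card_ne_zero (hcofactor i ▸ (prod_range_add_pos k).ne')
    rw [← Nat.card_eq_of_bijective _ ⟨HurwitzOrbit.ofPartner_injective hp,
        HurwitzOrbit.ofPartner_surjective hp⟩,
      Nat.card_sigma, Finset.sum_congr rfl fun i _ => hcofactor i, Finset.sum_const,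
      Finset.card_univ, PartnerIndex.card_eq hp, hx, smul_eq_mul, prod_range_add_succ]
    rfl

end Orbits

section Length

variable {α : Type*} [Fintype α] [DecidableEq α] {x : Perm α}

theorem evenCycles_eq_image_support (x : Perm α) :
    evenCycles x
      = (x.cycleFactorsFinset.filter fun c => Even c.support.card).image support := by
  ext C
  rw [mem_evenCycles, Finset.mem_image]
  constructor
  · rintro ⟨⟨p, rfl⟩, hp⟩
    have hne := apply_ne_self_of_even hp
    rw [cycleSet_eq_support_cycleOf hne] at hp ⊢
    exact ⟨x.cycleOf p, Finset.mem_filter.2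
      ⟨cycleOf_mem_cycleFactorsFinset_iff.2 (mem_support.2 hne), hp⟩, rfl⟩
  · rintro ⟨c, hc, rfl⟩
    obtain ⟨hmem, heven⟩ := Finset.mem_filter.1 hc
    obtain ⟨hcycle, happly⟩ := mem_cycleFactorsFinset_iff.1 hmem
    obtain ⟨p, hp⟩ := hcycle.nonempty_support
    have hne : x p ≠ p := happly p hp ▸ mem_support.1 hp
    exact ⟨⟨p, by rw [cycleSet_eq_support_cycleOf hne, ← cycle_is_cycleOf hp hmem]⟩, heven⟩

theorem injOn_support_cycleFactorsFinset (x : Perm α) :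
    Set.InjOn support (x.cycleFactorsFinset : Set (Perm α)) := by
  intro c hc d hd hcd
  obtain ⟨p, hp⟩ := (mem_cycleFactorsFinset_iff.1 hc).1.nonempty_support
  rw [cycle_is_cycleOf hp hc, cycle_is_cycleOf (hcd ▸ hp) hd]

theorem card_filter_even_cycleType (x : Perm α) :
    (x.cycleType.filter fun n => Even n).card = (evenCycles x).card := by
  rw [cycleType_def, Multiset.filter_map, Multiset.card_map, evenCycles_eq_image_support,
    Finset.card_image_of_injOn
      ((injOn_support_cycleFactorsFinset x).mono (Finset.coe_subset.2 (Finset.filter_subset _ _)))]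
  rfl

theorem IsReduced.lenT_prod {w : List (Perm α)} (hw : IsReduced w) :
    lenT {σ : Perm α | σ.IsThreeCycle} w.prod = w.length := by
  have hmem : ∃ l : List (Perm α),
      (∀ t ∈ l, t ∈ {σ : Perm α | σ.IsThreeCycle}) ∧ l.prod = w.prod ∧ l.length = w.length :=
    ⟨w, hw.isThreeCycle, rfl, rfl⟩
  refine le_antisymm (Nat.sInf_le hmem) (le_csInf ⟨_, hmem⟩ ?_)
  rintro _ ⟨l, hl, hprod, rfl⟩
  have hbound := card_le_oddCycleCount_prod hl
  have hcard := hw.card_eq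
  rw [hprod] at hbound
  omega

theorem isReduced_iff_length_eq_lenT (hx : ∃ v, IsReduced v ∧ v.prod = x) {w : List (Perm α)}
    (hw : w.prod = x) :
    IsReduced w ↔ w.length = lenT {σ : Perm α | σ.IsThreeCycle} x ∧ ∀ t ∈ w, t.IsThreeCycle := by
  obtain ⟨v, hv, rfl⟩ := hx
  refine ⟨fun h => ⟨hw ▸ h.lenT_prod.symm, h.isThreeCycle⟩, fun ⟨hlen, hthree⟩ => ⟨hthree, ?_⟩⟩
  rw [hw, hlen, hv.lenT_prod, hv.card_eq]

theorem exists_isReduced {k : ℕ} (hx : (evenCycles x).card = 2 * k) :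
    ∃ w, IsReduced w ∧ w.prod = x := by
  have hpos : 0 < Nat.card (HurwitzOrbit x) := card_hurwitzOrbit hx ▸ prod_range_add_pos k
  obtain ⟨⟨w, hw⟩⟩ := (Nat.card_pos_iff.1 hpos).1
  exact ⟨w, hw⟩

theorem prod_range_add_eq_one_iff {k : ℕ} : ∏ i ∈ Finset.range k, (k + 1 + i) = 1 ↔ k = 0 := by
  refine ⟨fun h => ?_, ?_⟩
  · by_contra hk
    have hfactor := Finset.prod_eq_one_iff.1 h 0 (Finset.mem_range.2 (Nat.pos_of_ne_zero hk))
    omega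
  · rintro rfl
    rfl

theorem card_quot_length_eq_lenT {k : ℕ} (hx : (evenCycles x).card = 2 * k) :
    Nat.card (Quot (fun w w' : {l : List (Perm α) //
        l.length = lenT {σ : Perm α | σ.IsThreeCycle} x ∧ (∀ t ∈ l, t.IsThreeCycle) ∧
          l.prod = x} => HurwitzMove w.1 w'.1))
      = ∏ i ∈ Finset.range k, (k + 1 + i) := by
  have hred (l : List (Perm α)) :
      (l.length = lenT {σ : Perm α | σ.IsThreeCycle} x ∧ (∀ t ∈ l, t.IsThreeCycle) ∧ l.prod = x)
        = (IsReduced l ∧ l.prod = x) := by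
    rw [← and_assoc]
    exact propext (and_congr_left fun hl =>
      (isReduced_iff_length_eq_lenT (exists_isReduced hx) hl).symm)
  exact (congrArg (fun P : List (Perm α) → Prop =>
    Nat.card (Quot fun w w' : Subtype P => HurwitzMove w.1 w'.1)) (funext hred)).trans
    (card_hurwitzOrbit hx)

end Length

end ThreeCycleFactorization

open ThreeCycleFactorization in
theorem stmt19_general {α : Type*} [Fintype α] [DecidableEq α] (x : Perm α) (k : ℕ)
    (hk : (x.cycleType.filter (fun n => Even n)).card = 2 * k) :
    Nat.card (Quot (fun w w' : {l : List (Perm α) //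
        l.length = lenT {σ : Perm α | σ.IsThreeCycle} x ∧ (∀ t ∈ l, t.IsThreeCycle) ∧
          l.prod = x} => HurwitzMove w.1 w'.1))
      = ∏ i ∈ Finset.range k, (k + 1 + i)
    ∧ (Nat.card (Quot (fun w w' : {l : List (Perm α) //
        l.length = lenT {σ : Perm α | σ.IsThreeCycle} x ∧ (∀ t ∈ l, t.IsThreeCycle) ∧
          l.prod = x} => HurwitzMove w.1 w'.1)) = 1 ↔ ∀ c ∈ x.cycleType, Odd c) := by
  have heven : (evenCycles x).card = 2 * k := (card_filter_even_cycleType x).symm.trans hk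
  have hodd : k = 0 ↔ ∀ c ∈ x.cycleType, Odd c := by
    rw [← mul_eq_zero_iff_left two_ne_zero, ← hk, Multiset.card_eq_zero, Multiset.filter_eq_nil]
    simp only [Nat.not_even_iff_odd]
  rw [card_quot_length_eq_lenT heven, prod_range_add_eq_one_iff]
  exact ⟨rfl, hodd⟩

theorem stmt19 (N : ℕ) (hN : 3 ≤ N) (x : Perm (Fin N))
    (hx : x ∈ alternatingGroup (Fin N)) (k : ℕ)
    (hk : (x.cycleType.filter (fun n => Even n)).card = 2*k) :
    Nat.card (Quot (fun w w' : {l : List (Perm (Fin N)) //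
        l.length = lenT (threeCycles N) x ∧ (∀ t ∈ l, t.IsThreeCycle) ∧ l.prod = x} =>
        HurwitzMove w.1 w'.1))
      = ∏ i ∈ Finset.range k, (k+1+i)
    ∧ (Nat.card (Quot (fun w w' : {l : List (Perm (Fin N)) //
        l.length = lenT (threeCycles N) x ∧ (∀ t ∈ l, t.IsThreeCycle) ∧ l.prod = x} =>
        HurwitzMove w.1 w'.1)) = 1 ↔ ∀ c ∈ x.cycleType, Odd c) :=
  stmt19_general x k hk
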